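/- arXiv:2202.08366 — 15 statements merged into one kernel-verified Lean document; each statement's English description precedes it below -/
import Mathlib

section
/- Assume v > λ_s/(λ_s+λ_a). Suppose θ_B ∈ [0,1] satisfies either (i) θ_B ≤ λ_a and λ_s·(v+θ_B) = 1−λ_a, or (ii) λ_a ≤ θ_B ≤ 1−λ_s and λ_s·(v+θ_B)/(1−θ_B) = λ_a/θ_B. Then θ_B > 1−v. (The Boston complete-information equilibrium threshold exceeds the DA threshold θ_D = 1−v.) -/
/-! Suppose `v + θB ≤ 1`. Condition (i) gives `lamS * (v + θB) = lamS + lamB > lamS`, which is absurd.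
Condition (ii) gives `lamA * (1 - θB) ≤ lamS * θB`, i.e. `θB ≥ lamA / (lamS + lamA)`, whereas
`v > lamS / (lamS + lamA)` says `1 - v < lamA / (lamS + lamA)`; so `θB > 1 - v` after all. -/

/-- If v > λ_s/(λ_s+λ_a) and θ_B satisfies one of the two
Boston indifference conditions, then θ_B > 1 − v. -/
theorem boston_threshold_exceeds_da_threshold
    (lamS lamA lamB v : ℝ)
    (hS : 0 < lamS) (hA : 0 < lamA) (hB : 0 < lamB)
    (hsum : lamS + lamA + lamB = 1)
    (hv : v ∈ Set.Ioo (0 : ℝ) 1)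
    (hvr : v > lamS / (lamS + lamA))
    (θB : ℝ) (hθB : θB ∈ Set.Icc (0 : ℝ) 1)
    (hcond : (θB ≤ lamA ∧ lamS * (v + θB) = 1 - lamA) ∨
      (lamA ≤ θB ∧ θB ≤ 1 - lamS ∧
        lamS * (v + θB) / (1 - θB) = lamA / θB)) :
    θB > 1 - v := by
  rw [gt_iff_lt, div_lt_iff₀ (by linarith)] at hvr
  by_contra! hle
  have hle1 : v + θB ≤ 1 := by linarith
  have hbound : lamS * (v + θB) ≤ lamS := mul_le_of_le_one_right hS.le hle1
  rcases hcond with ⟨-, h⟩ | ⟨h1, h2, h⟩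
  · -- here `lamS * (v + θB) = lamS + lamB > lamS`
    linarith
  · have hθ : 0 < θB := by linarith
    rw [div_eq_div_iff (by linarith) (ne_of_gt hθ)] at h
    -- `v + θB ≤ 1` turns indifference into `lamA * (1 - θB) ≤ lamS * θB`
    have hlow := mul_le_mul_of_nonneg_right hbound hθ.le
    have hup : (lamS + lamA) * θB ≤ (lamS + lamA) * (1 - v) :=
      mul_le_mul_of_nonneg_left hle (by linarith)
    linarith
end

section
/- Let 0 < θ_D < θ_B < 1 and λ_s > 0. Define step densities g_D(θ) = λ_s/(1−θ_D) for θ > θ_D and g_D(θ) = 0 for θ < θ_D, and g_B(θ) = λ_s/(1−θ_B) for θ > θ_B and g_B(θ) = 0 for θ < θ_B. Then for every θ̄ ∈ (0,1), ∫_0^θ̄ g_B(θ) dθ ≤ ∫_0^θ̄ g_D(θ) dθ, with strict inequality for every θ̄ ∈ (θ_D, 1). (With costless information acquisition, the DA equilibrium allocation of school s is first-order stochastically dominated by, i.e. less efficient than, the Boston equilibrium allocation.) -/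
/-!
Each cumulative mass is `λ / (1 - a) * max (x - a) 0` (`integral_step`). For `a < x < 1` this equals
`λ * (x - a) / (1 - a)`, which is strictly decreasing in `a`; for `x ≤ θD` both masses vanish.
-/

open intervalIntegral

/-- Cumulative mass of a step density with threshold `a` and height `c`; the value of `g` at `a`
itself is unconstrained and irrelevant, since `{a}` is null. -/
lemma integral_step (a c x : ℝ) (ha : 0 < a) (hx : 0 < x) (g : ℝ → ℝ)
    (h1 : ∀ θ, a < θ → g θ = c) (h0 : ∀ θ, θ < a → g θ = 0) :
    (∫ θ in (0 : ℝ)..x, g θ) = c * max (x - a) 0 := by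
  have hae : ∀ᵐ θ : ℝ, θ ≠ a := MeasureTheory.Measure.ae_ne MeasureTheory.volume a
  have low : ∀ y, 0 < y → y ≤ a →
      ∀ᵐ θ : ℝ, θ ∈ Set.uIoc 0 y → (0 : ℝ) = g θ := by
    intro y hy hya
    filter_upwards [hae] with θ hθ hm
    rw [Set.uIoc_of_le hy.le] at hm
    exact (h0 θ (lt_of_le_of_ne (hm.2.trans hya) hθ)).symm
  rcases le_or_gt x a with hxa | hxa
  · rw [← intervalIntegral.integral_congr_ae (low x hx hxa), max_eq_right (by linarith)]
    simp
  · have high : ∀ᵐ θ : ℝ, θ ∈ Set.uIoc a x → c = g θ := by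
      refine Filter.Eventually.of_forall fun θ hm => ?_
      rw [Set.uIoc_of_le hxa.le] at hm
      exact (h1 θ hm.1).symm
    have i1 : IntervalIntegrable g MeasureTheory.volume 0 a :=
      (intervalIntegrable_const (c := (0 : ℝ))).congr_ae
        ((MeasureTheory.ae_restrict_iff' measurableSet_uIoc).2 (low a ha le_rfl))
    have i2 : IntervalIntegrable g MeasureTheory.volume a x :=
      (intervalIntegrable_const (c := c)).congr_ae
        ((MeasureTheory.ae_restrict_iff' measurableSet_uIoc).2 high)
    rw [← intervalIntegral.integral_add_adjacent_intervals i1 i2,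
      ← intervalIntegral.integral_congr_ae (low a ha le_rfl),
      ← intervalIntegral.integral_congr_ae high, max_eq_left (by linarith)]
    simp [mul_comm]

/-- With thresholds 0 < θ_D < θ_B < 1, the DA step allocation
is first-order stochastically dominated by the Boston step allocation:
∫_0^θ̄ g_B ≤ ∫_0^θ̄ g_D for every θ̄ ∈ (0,1), strictly for θ̄ ∈ (θ_D,1). -/
theorem da_allocation_less_efficient_complete_info
    (lamS θD θB : ℝ) (hS : 0 < lamS)
    (hD0 : 0 < θD) (hDB : θD < θB) (hB1 : θB < 1)
    (gD gB : ℝ → ℝ)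
    (hgD1 : ∀ θ, θD < θ → gD θ = lamS / (1 - θD))
    (hgD0 : ∀ θ, θ < θD → gD θ = 0)
    (hgB1 : ∀ θ, θB < θ → gB θ = lamS / (1 - θB))
    (hgB0 : ∀ θ, θ < θB → gB θ = 0) :
    (∀ θbar ∈ Set.Ioo (0 : ℝ) 1,
        (∫ θ in (0 : ℝ)..θbar, gB θ) ≤ ∫ θ in (0 : ℝ)..θbar, gD θ) ∧
    (∀ θbar ∈ Set.Ioo θD 1,
        (∫ θ in (0 : ℝ)..θbar, gB θ) < ∫ θ in (0 : ℝ)..θbar, gD θ) := by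
  have strict : ∀ θbar ∈ Set.Ioo θD 1,
      (∫ θ in (0 : ℝ)..θbar, gB θ) < ∫ θ in (0 : ℝ)..θbar, gD θ := by
    rintro x ⟨hx, hx1⟩
    rw [integral_step θB _ x (hD0.trans hDB) (hD0.trans hx) gB hgB1 hgB0,
      integral_step θD _ x hD0 (hD0.trans hx) gD hgD1 hgD0, max_eq_left (by linarith : 0 ≤ x - θD)]
    have hD : 0 < 1 - θD := by linarith
    have hB : 0 < 1 - θB := by linarith
    rcases le_or_gt x θB with hxB | hxB
    · rw [max_eq_right (by linarith), mul_zero]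
      exact mul_pos (div_pos hS hD) (by linarith)
    · rw [max_eq_left (by linarith), div_mul_eq_mul_div, div_mul_eq_mul_div, div_lt_div_iff₀ hB hD]
      -- The difference of the two sides is `lamS * (θB - θD) * (1 - x)`.
      nlinarith [mul_pos (mul_pos hS (sub_pos.2 hDB)) (sub_pos.2 hx1)]
  refine ⟨fun x hx => ?_, strict⟩
  rcases le_or_gt x θD with hxD | hxD
  · rw [integral_step θB _ x (hD0.trans hDB) hx.1 gB hgB1 hgB0,
      integral_step θD _ x hD0 hx.1 gD hgD1 hgD0, max_eq_right (by linarith),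
      max_eq_right (by linarith), mul_zero, mul_zero]
  · exact (strict x ⟨hxD, hx.2⟩).le
end

section
/- Let μ > 0, λ_s > 0, r ∈ (0,1), and c ∈ ℝ. Then r = ∫_0^1 (1 + ((1−r)/r)·exp(−(c + λ_s·θ/r)/μ))^{−1} dθ holds if and only if exp(λ_s/μ) = 1 + (exp(λ_s/(r·μ)) − 1)/(((1−r)/r)·exp(−c/μ) + 1). -/
/-!
With `A = ((1 - r) / r) e^{-c/μ}` and `k = λ_s / (r μ)` the integrand is the logistic function
`1 / (1 + A e^{-kθ})`, whose integral over `[0, 1]` is `log ((A + e^k) / (A + 1)) / k`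
(`integral_logistic`). Since `r k = λ_s / μ`, multiplying the consistency condition by `k` and
exponentiating gives `e^{λ_s/μ} = (A + e^k) / (A + 1) = 1 + (e^k - 1) / (A + 1)`; both steps are
reversible.
-/

/-- The substitution `1 / (1 + A e^{-kθ}) = e^{kθ} / (A + e^{kθ})` exhibits
`θ ↦ log (A + e^{kθ}) / k` as an antiderivative of the logistic function. -/
lemma integral_logistic (A k : ℝ) (hA : 0 < A) (hk : 0 < k) :
    ∫ θ in (0 : ℝ)..1, (1 + A * Real.exp (-(k * θ)))⁻¹
      = Real.log ((A + Real.exp k) / (A + 1)) / k := by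
  have hderiv : ∀ θ ∈ Set.uIcc (0 : ℝ) 1,
      HasDerivAt (fun θ => Real.log (A + Real.exp (k * θ)) / k)
        (1 + A * Real.exp (-(k * θ)))⁻¹ θ := by
    intro θ _
    have hE := Real.exp_pos (k * θ)
    have h1 : HasDerivAt (fun θ : ℝ => k * θ) k θ := by
      simpa using (hasDerivAt_id θ).const_mul k
    have h2 := ((h1.exp.const_add A).log (by positivity)).div_const k
    refine h2.congr_deriv ?_
    rw [Real.exp_neg]
    field_simp
    ring
  have hcont : Continuous (fun θ : ℝ => (1 + A * Real.exp (-(k * θ)))⁻¹) :=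
    Continuous.inv₀ (by fun_prop) (fun θ => by positivity)
  rw [intervalIntegral.integral_eq_sub_of_hasDerivAt hderiv (hcont.intervalIntegrable 0 1),
    Real.log_div (by positivity) (by positivity)]
  simp only [mul_one, mul_zero, Real.exp_zero]
  ring

/-- The integral consistency condition
r = ∫_0^1 (1 + ((1−r)/r)·exp(−(c + λ_s·θ/r)/μ))^{−1} dθ
holds iff exp(λ_s/μ) = 1 + (exp(λ_s/(rμ)) − 1)/(((1−r)/r)·exp(−c/μ) + 1). -/
theorem consistency_iff_closed_form
    (μ lamS r c : ℝ) (hμ : 0 < μ) (hS : 0 < lamS)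
    (hr : r ∈ Set.Ioo (0 : ℝ) 1) :
    (r = ∫ θ in (0 : ℝ)..1,
        (1 + ((1 - r) / r) * Real.exp (-(c + lamS * θ / r) / μ))⁻¹) ↔
    Real.exp (lamS / μ) =
      1 + (Real.exp (lamS / (r * μ)) - 1) /
        (((1 - r) / r) * Real.exp (-c / μ) + 1) := by
  obtain ⟨hr0, hr1⟩ := hr
  have hA : 0 < (1 - r) / r * Real.exp (-c / μ) :=
    mul_pos (div_pos (by linarith) hr0) (Real.exp_pos _)
  have hk : 0 < lamS / (r * μ) := by positivity
  have hfun : ∀ θ : ℝ, ((1 - r) / r) * Real.exp (-(c + lamS * θ / r) / μ)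
      = (1 - r) / r * Real.exp (-c / μ) * Real.exp (-(lamS / (r * μ) * θ)) := by
    intro θ
    rw [mul_assoc, ← Real.exp_add]
    congr 2
    field_simp
    ring
  have hrk : lamS / μ = r * (lamS / (r * μ)) := by field_simp
  simp only [hfun]
  rw [integral_logistic _ _ hA hk, hrk]
  generalize (1 - r) / r * Real.exp (-c / μ) = A at hA
  generalize lamS / (r * μ) = k at hk
  have hq : 1 + (Real.exp k - 1) / (A + 1) = (A + Real.exp k) / (A + 1) := by
    field_simp
    ring
  have hpos : 0 < (A + Real.exp k) / (A + 1) := by positivity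
  rw [hq, eq_div_iff hk.ne']
  exact ⟨fun h => by rw [h, Real.exp_log hpos], fun h => by rw [← h, Real.log_exp]⟩
end

section
/- Fix z > 0 and w > 0. Set x̂ := (z+w)/z, v̄ := (1/z)·ln((e^z−1)/z), v̲ := (1/(z+w))·ln((w/(1−e^{−w}))·(e^z−1)/z), and f(x,v) := (e^{z·x}−1)/(e^z−1) − (x−1)·e^{z·x·(1−v)}. Then for v ∈ (0,1): v ∈ (v̲, v̄) if and only if there exists x ∈ (1, x̂) with f(x,v) = 1; moreover, when v ∈ (v̲, v̄), the solution x of f(x,v)=1 with x > 1 is unique. (Equivalently, the DA mechanism has a unique interior equilibrium fraction r^D = 1/x ∈ (r̂, 1) exactly when v ∈ (v̲, v̄).) -/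
/-!
Put `t = z (x - 1)`. With `h t = log (t / (1 - e^{-t}))` (`logRatio` below), the equation
`f x v = 1` for `x > 1` becomes `v = V t`, where `V t = (h t + z - h z) / (z + t)` and `t > 0`
(`equation_iff`). Moreover `V w = v̲`, and since `h t → 0` as `t → 0⁺`, also `V t → v̄`.

Everything therefore follows once `V` is strictly decreasing on `(0, ∞)`, that is, once
`h' t (z + t) < h t + z - h z`. The function `h` is concave because `t < 2 sinh (t / 2)`, so the
tangent line at `t` gives `h z ≤ h t + h' t (z - t)`, and what remains is `2 z h' t < z`, i.e.
`h' t < 1 / 2`, which is the inequality `2 (e^t - 1) < t (e^t + 1)`.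
-/

open Filter Topology Set

/-- The function `log (t / (1 - e^{-t}))`, expanded for `t > 0` as `t + log t - log (e^t - 1)`. -/
noncomputable def logRatio (t : ℝ) : ℝ := t + Real.log t - Real.log (Real.exp t - 1)

/-- The value of `v` for which `x = 1 + t / z` solves the equilibrium equation. -/
noncomputable def equilibriumValue (z t : ℝ) : ℝ := (logRatio t + (z - logRatio z)) / (z + t)

lemma exp_sub_one_pos {t : ℝ} (ht : 0 < t) : 0 < Real.exp t - 1 := by
  have := Real.add_one_lt_exp ht.ne'
  linarith

lemma hasDerivAt_logRatio {t : ℝ} (ht : 0 < t) :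
    HasDerivAt logRatio (t⁻¹ - (Real.exp t - 1)⁻¹) t := by
  have hB := exp_sub_one_pos ht
  have h1 : HasDerivAt logRatio _ t := ((hasDerivAt_id t).add (Real.hasDerivAt_log ht.ne')).sub
    (((Real.hasDerivAt_exp t).sub_const 1).log hB.ne')
  refine h1.congr_deriv ?_
  field_simp
  ring

lemma hasDerivAt_deriv_logRatio {t : ℝ} (ht : 0 < t) :
    HasDerivAt (fun t : ℝ => t⁻¹ - (Real.exp t - 1)⁻¹)
      (-(t ^ 2)⁻¹ - -Real.exp t / (Real.exp t - 1) ^ 2) t :=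
  (hasDerivAt_inv ht.ne').sub
    (((Real.hasDerivAt_exp t).sub_const 1).inv (exp_sub_one_pos ht).ne')

/-- This is `t < 2 sinh (t / 2)`, squared and cleared of denominators. -/
lemma sq_mul_exp_le {t : ℝ} (ht : 0 < t) : t ^ 2 * Real.exp t ≤ (Real.exp t - 1) ^ 2 := by
  have h := Real.self_lt_sinh_iff.2 (half_pos ht)
  rw [Real.sinh_eq] at h
  have h1 : Real.exp (t / 2) * Real.exp (-(t / 2)) = 1 := by
    rw [← Real.exp_add]; simp
  have h2 : Real.exp t = Real.exp (t / 2) ^ 2 := by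
    rw [sq, ← Real.exp_add]; ring_nf
  have h3 := Real.exp_pos (t / 2)
  have h4 : t * Real.exp (t / 2) ≤ Real.exp t - 1 := by
    rw [h2]; nlinarith
  calc t ^ 2 * Real.exp t = (t * Real.exp (t / 2)) ^ 2 := by rw [h2]; ring
    _ ≤ _ := by gcongr

lemma concaveOn_logRatio : ConcaveOn ℝ (Ioi 0) logRatio := by
  refine concaveOn_of_hasDerivWithinAt2_nonpos (convex_Ioi 0)
    (f' := fun t : ℝ => t⁻¹ - (Real.exp t - 1)⁻¹)
    (f'' := fun t : ℝ => -(t ^ 2)⁻¹ - -Real.exp t / (Real.exp t - 1) ^ 2)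
    (fun t ht => (hasDerivAt_logRatio ht).continuousAt.continuousWithinAt) ?_ ?_ ?_
  · intro t ht
    rw [interior_Ioi] at ht
    exact (hasDerivAt_logRatio ht).hasDerivWithinAt
  · intro t ht
    rw [interior_Ioi] at ht
    exact (hasDerivAt_deriv_logRatio ht).hasDerivWithinAt
  · intro t ht
    rw [interior_Ioi] at ht
    have ht' : 0 < t := ht
    have hB := exp_sub_one_pos ht'
    have h : Real.exp t / (Real.exp t - 1) ^ 2 ≤ (t ^ 2)⁻¹ := by
      rw [inv_eq_one_div, div_le_div_iff₀ (by positivity) (by positivity)]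
      linarith [sq_mul_exp_le ht']
    rw [neg_div]
    linarith

lemma logRatio_le_tangent {z t : ℝ} (hz : 0 < z) (ht : 0 < t) :
    logRatio z ≤ logRatio t + (t⁻¹ - (Real.exp t - 1)⁻¹) * (z - t) := by
  rcases lt_trichotomy t z with h | rfl | h
  · have := concaveOn_logRatio.slope_le_of_hasDerivAt ht hz h (hasDerivAt_logRatio ht)
    rw [slope_def_field, div_le_iff₀ (by linarith)] at this
    linarith
  · simp
  · have := concaveOn_logRatio.le_slope_of_hasDerivAt hz ht h (hasDerivAt_logRatio ht)
    rw [slope_def_field, le_div_iff₀ (by linarith)] at this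
    linarith

lemma two_mul_exp_sub_one_lt {t : ℝ} (ht : 0 < t) :
    2 * (Real.exp t - 1) < t * (Real.exp t + 1) := by
  have hd : ∀ s : ℝ, HasDerivAt (fun s : ℝ => s * (Real.exp s + 1) - 2 * (Real.exp s - 1))
      (1 * (Real.exp s + 1) + s * Real.exp s - 2 * Real.exp s) s := fun s =>
    ((hasDerivAt_id s).mul ((Real.hasDerivAt_exp s).add_const 1)).sub
      (((Real.hasDerivAt_exp s).sub_const 1).const_mul 2)
  have hm : StrictMonoOn (fun s : ℝ => s * (Real.exp s + 1) - 2 * (Real.exp s - 1)) (Ici 0) := by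
    refine strictMonoOn_of_hasDerivWithinAt_pos (convex_Ici 0)
      (fun s _ => (hd s).continuousAt.continuousWithinAt)
      (fun s _ => (hd s).hasDerivWithinAt) ?_
    intro s hs
    rw [interior_Ici] at hs
    -- The derivative is `e^s (e^{-s} - (1 - s))`.
    have h1 := Real.add_one_lt_exp (neg_ne_zero.2 (ne_of_gt hs))
    have h2 : Real.exp s * Real.exp (-s) = 1 := by rw [← Real.exp_add]; simp
    nlinarith [Real.exp_pos s]
  have := hm self_mem_Ici ht.le ht
  simp only [Real.exp_zero] at this
  linarith

lemma deriv_logRatio_lt_half {t : ℝ} (ht : 0 < t) :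
    t⁻¹ - (Real.exp t - 1)⁻¹ < 1 / 2 := by
  have hB := exp_sub_one_pos ht
  have h := two_mul_exp_sub_one_lt ht
  have : t⁻¹ - (Real.exp t - 1)⁻¹ = (Real.exp t - 1 - t) / (t * (Real.exp t - 1)) := by
    field_simp
  rw [this, div_lt_div_iff₀ (by positivity) (by norm_num)]
  linarith

lemma hasDerivAt_equilibriumValue {z t : ℝ} (hz : 0 < z) (ht : 0 < t) :
    HasDerivAt (equilibriumValue z)
      (((t⁻¹ - (Real.exp t - 1)⁻¹) * (z + t) - (logRatio t + (z - logRatio z)) * 1)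
        / (z + t) ^ 2) t :=
  ((hasDerivAt_logRatio ht).add_const _).div ((hasDerivAt_id t).const_add z)
    (by positivity : z + t ≠ 0)

lemma strictAntiOn_equilibriumValue {z : ℝ} (hz : 0 < z) :
    StrictAntiOn (equilibriumValue z) (Ioi 0) := by
  refine strictAntiOn_of_hasDerivWithinAt_neg (convex_Ioi 0)
    (f' := fun t => ((t⁻¹ - (Real.exp t - 1)⁻¹) * (z + t)
      - (logRatio t + (z - logRatio z)) * 1) / (z + t) ^ 2)
    (fun t ht => (hasDerivAt_equilibriumValue hz ht).continuousAt.continuousWithinAt) ?_ ?_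
  · intro t ht
    rw [interior_Ioi] at ht
    exact (hasDerivAt_equilibriumValue hz ht).hasDerivWithinAt
  · intro t ht
    rw [interior_Ioi] at ht
    have ht' : 0 < t := ht
    have h1 := logRatio_le_tangent hz ht'
    have h2 := deriv_logRatio_lt_half ht'
    refine div_neg_of_neg_of_pos ?_ (by positivity)
    nlinarith

lemma tendsto_logRatio : Tendsto logRatio (𝓝[>] 0) (𝓝 0) := by
  have hid : Tendsto (fun t : ℝ => t) (𝓝[>] 0) (𝓝 0) :=
    tendsto_nhdsWithin_of_tendsto_nhds tendsto_id
  refine tendsto_of_tendsto_of_tendsto_of_le_of_le' tendsto_const_nhds hid ?_ ?_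
  · filter_upwards [self_mem_nhdsWithin] with t ht
    have ht' : 0 < t := ht
    have hB := exp_sub_one_pos ht'
    have h1 := Real.add_one_le_exp (-t)
    have h2 : Real.exp t * Real.exp (-t) = 1 := by rw [← Real.exp_add]; simp
    have h3 : Real.exp t - 1 ≤ Real.exp t * t := by nlinarith [Real.exp_pos t]
    have h4 := Real.log_le_log hB h3
    rw [Real.log_mul (Real.exp_pos t).ne' ht'.ne', Real.log_exp] at h4
    unfold logRatio
    linarith
  · filter_upwards [self_mem_nhdsWithin] with t ht
    have h := Real.log_le_log ht (by linarith [Real.add_one_le_exp t] : t ≤ Real.exp t - 1)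
    unfold logRatio
    linarith

lemma tendsto_equilibriumValue {z : ℝ} (hz : 0 < z) :
    Tendsto (equilibriumValue z) (𝓝[>] 0) (𝓝 ((1 / z) * Real.log ((Real.exp z - 1) / z))) := by
  have hid : Tendsto (fun t : ℝ => t) (𝓝[>] 0) (𝓝 0) :=
    tendsto_nhdsWithin_of_tendsto_nhds tendsto_id
  have h : Tendsto (equilibriumValue z) _ _ := (tendsto_logRatio.add_const (z - logRatio z)).div (hid.const_add z)
    (by simpa using hz.ne')
  convert h using 2
  rw [Real.log_div (exp_sub_one_pos hz).ne' hz.ne']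
  unfold logRatio
  ring

lemma equilibriumValue_eq {z w : ℝ} (hz : 0 < z) (hw : 0 < w) :
    equilibriumValue z w = (1 / (z + w)) *
      Real.log ((w / (1 - Real.exp (-w))) * (Real.exp z - 1) / z) := by
  have hA := exp_sub_one_pos hz
  have hB := exp_sub_one_pos hw
  have hE := Real.exp_pos w
  have h1 : (w / (1 - Real.exp (-w))) * (Real.exp z - 1) / z =
      Real.exp w * w / (Real.exp w - 1) * ((Real.exp z - 1) / z) := by
    have : 1 - Real.exp (-w) = (Real.exp w - 1) / Real.exp w := by
      rw [Real.exp_neg]; field_simp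
    rw [this]
    field_simp
  rw [h1, Real.log_mul (by positivity) (by positivity), Real.log_div (by positivity) hB.ne',
    Real.log_mul hE.ne' hw.ne', Real.log_exp, Real.log_div hA.ne' hz.ne']
  unfold equilibriumValue logRatio
  ring

lemma equation_iff {z x : ℝ} (hz : 0 < z) (hx : 1 < x) (v : ℝ) :
    (Real.exp (z * x) - 1) / (Real.exp z - 1) - (x - 1) * Real.exp (z * x * (1 - v)) = 1 ↔
      equilibriumValue z (z * (x - 1)) = v := by
  obtain ⟨t, rfl⟩ : ∃ t, x = 1 + t / z := ⟨z * (x - 1), by field_simp; ring⟩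
  have ht : 0 < t := by
    have : 0 < t / z := by linarith
    exact (div_pos_iff_of_pos_right hz).1 this
  have e1 : z * (1 + t / z) = z + t := by field_simp
  have e2 : z * (1 + t / z - 1) = t := by field_simp; ring
  have e3 : (1 + t / z - 1) = t / z := by ring
  have hA := exp_sub_one_pos hz
  have hB := exp_sub_one_pos ht
  have hEz := Real.exp_pos z
  have hEt := Real.exp_pos t
  have hE := Real.exp_pos ((z + t) * v)
  have e4 : Real.exp ((z + t) * (1 - v)) = Real.exp z * Real.exp t / Real.exp ((z + t) * v) := by
    rw [← Real.exp_add, ← Real.exp_sub]; ring_nf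
  have e5 : Real.exp (logRatio t + (z - logRatio z)) =
      Real.exp t * t / (Real.exp t - 1) * ((Real.exp z - 1) / z) := by
    have : logRatio t + (z - logRatio z) =
        t + Real.log t - Real.log (Real.exp t - 1) + (Real.log (Real.exp z - 1) - Real.log z) := by
      unfold logRatio; ring
    rw [this, Real.exp_add, Real.exp_sub, Real.exp_sub, Real.exp_add, Real.exp_log ht,
      Real.exp_log hB, Real.exp_log hA, Real.exp_log hz]
  rw [e1, e2, e3, e4, equilibriumValue, div_eq_iff (by positivity), mul_comm v,
    ← Real.exp_injective.eq_iff (a := logRatio t + (z - logRatio z)), e5, Real.exp_add]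
  generalize Real.exp ((z + t) * v) = E at *
  generalize Real.exp z = A at *
  generalize Real.exp t = B at *
  have key : (A * B - 1) / (A - 1) - t / z * (A * B / E) - 1 =
      (A * (B - 1)) / ((A - 1) * E) * (E - B * t / (B - 1) * ((A - 1) / z)) := by
    field_simp
    ring
  have hpos : (A * (B - 1)) / ((A - 1) * E) ≠ 0 := by positivity
  constructor
  · intro h
    rw [h, sub_self, eq_comm, mul_eq_zero] at key
    have := key.resolve_left hpos
    linarith
  · intro h
    rw [h, sub_self, mul_zero] at key
    linarith

/-- With z, w > 0, x̂ := (z+w)/z, v̄ := (1/z)·ln((e^z−1)/z),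
v̲ := (1/(z+w))·ln((w/(1−e^{−w}))·(e^z−1)/z), and
f(x,v) := (e^{zx}−1)/(e^z−1) − (x−1)·e^{zx(1−v)}, for v ∈ (0,1):
v ∈ (v̲, v̄) iff there exists x ∈ (1, x̂) with f(x,v) = 1; moreover, when
v ∈ (v̲, v̄), the solution x > 1 of f(x,v) = 1 is unique. -/
theorem da_interior_equilibrium_existence_uniqueness
    (z w : ℝ) (hz : 0 < z) (hw : 0 < w)
    (v : ℝ) (hv : v ∈ Set.Ioo (0 : ℝ) 1)
    (xhat vbar vlow : ℝ) (f : ℝ → ℝ → ℝ)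
    (hxhat : xhat = (z + w) / z)
    (hvbar : vbar = (1 / z) * Real.log ((Real.exp z - 1) / z))
    (hvlow : vlow = (1 / (z + w)) *
      Real.log ((w / (1 - Real.exp (-w))) * (Real.exp z - 1) / z))
    (hf : ∀ x u, f x u =
      (Real.exp (z * x) - 1) / (Real.exp z - 1) -
        (x - 1) * Real.exp (z * x * (1 - u))) :
    (v ∈ Set.Ioo vlow vbar ↔ ∃ x ∈ Set.Ioo 1 xhat, f x v = 1) ∧
    (v ∈ Set.Ioo vlow vbar →
      ∀ x₁ x₂, 1 < x₁ → 1 < x₂ → f x₁ v = 1 → f x₂ v = 1 → x₁ = x₂) := by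
  have hanti := strictAntiOn_equilibriumValue hz
  have hlim := tendsto_equilibriumValue hz
  rw [← hvbar] at hlim
  rw [← equilibriumValue_eq hz hw] at hvlow
  have hiff : ∀ x, 1 < x → (f x v = 1 ↔ equilibriumValue z (z * (x - 1)) = v) := by
    intro x hx
    rw [hf]
    exact equation_iff hz hx v
  have hpos : ∀ x, 1 < x → 0 < z * (x - 1) := fun x hx => mul_pos hz (by linarith)
  refine ⟨⟨?_, ?_⟩, ?_⟩
  · rintro ⟨h1, h2⟩
    obtain ⟨a, ⟨ha0, haw⟩, hav⟩ : ∃ a ∈ Ioo 0 w, v < equilibriumValue z a := by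
      have h := (hlim.eventually (lt_mem_nhds h2)).and (Ioo_mem_nhdsGT hw)
      obtain ⟨a, hav, ha⟩ := h.exists
      exact ⟨a, ha, hav⟩
    have hcont : ContinuousOn (equilibriumValue z) (Icc a w) := fun t ht =>
      (hasDerivAt_equilibriumValue hz (ha0.trans_le ht.1)).continuousAt.continuousWithinAt
    obtain ⟨t, ⟨hta, htw⟩, htv⟩ := intermediate_value_Ioo' haw.le hcont
      (show v ∈ Ioo _ _ from ⟨hvlow ▸ h1, hav⟩)
    have ht0 : 0 < t := ha0.trans hta
    have hx : 1 < 1 + t / z := by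
      have := div_pos ht0 hz
      linarith
    refine ⟨1 + t / z, ⟨hx, ?_⟩, (hiff _ hx).2 ?_⟩
    · rw [hxhat, add_div, div_self hz.ne']
      gcongr
    · rw [← htv]
      congr 1
      field_simp
      ring
  · rintro ⟨x, ⟨hx, hxw⟩, hfx⟩
    have ht := hpos x hx
    have htv := (hiff x hx).1 hfx
    have htw : z * (x - 1) < w := by
      rw [hxhat, lt_div_iff₀ hz] at hxw
      linarith
    refine ⟨?_, ?_⟩
    · rw [hvlow, ← htv]
      exact hanti ht hw htw
    · rw [← htv]
      -- Compare with the value at half the argument, which the limit at `0` still dominates.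
      have hhalf := half_pos ht
      refine (hanti hhalf ht (half_lt_self ht)).trans_le (ge_of_tendsto hlim ?_)
      filter_upwards [Ioo_mem_nhdsGT hhalf] with s hs
      exact (hanti hs.1 hhalf hs.2).le
  · intro _ x₁ x₂ h₁ h₂ hf₁ hf₂
    have h := hanti.injOn (hpos x₁ h₁) (hpos x₂ h₂)
      (((hiff x₁ h₁).1 hf₁).trans ((hiff x₂ h₂).1 hf₂).symm)
    have := mul_left_cancel₀ hz.ne' h
    linarith
end

section
/- Fix z, w, y > 0 and v ∈ (0,1) with v̲ < v < v̄, where v̄ := (1/z)·ln((e^z−1)/z) and v̲ := (1/(z+w))·ln((w/(1−e^{−w}))·(e^z−1)/z). Let r̂ := z/(z+w). Define H^D(r) := 1 + (e^{z/r}−1)/(((1−r)/r)·e^{z(1−v)/r} + 1) and H^B(r) := 1 + (e^{z/r}−1)/(((1−r)/r)·e^{α(r)}·e^{−zv/r} + 1) with α(r) := min{w/(1−r), (y+z)/r}, for r ∈ (0,1). If r^D ∈ (r̂, 1) satisfies H^D(r^D) = e^z, then there exists exactly one r^B ∈ (r̂, 1) with H^B(r^B) = e^z, and it satisfies r^B <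 r^D. -/
/-!
Substitute `r = z / (s + z)`, which maps `s ∈ (0, w)` decreasingly onto `r ∈ (r̂, 1)`. With
`L s = log ((e ^ s - 1) / s)`, taking logarithms turns the two equilibrium equations into
`φ_D s = 0` and `φ_B s = 0`, where

* `φ_D s = L s + v (s + z) + z + log (z / (e ^ z - 1)) - (s + z)`,
* `φ_B s = L s + v (s + z) + z + log (z / (e ^ z - 1)) - min (w + w z / s) ((y + z) (s + z) / z)`.

On `(0, w)` the minimum exceeds `s + z`, so `φ_B < φ_D`, and in particular `φ_B` is negative at the
root of `φ_D`; the lower bound on `v` says exactly that `φ_B w > 0`. The intermediate value theorem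
gives a root of `φ_B` with larger `s`, that is, smaller `r`.

For uniqueness, `φ_B` is the maximum of two functions, each of which stays positive after the first
point where it is nonnegative: the one with `w + w z / s` is strictly increasing, and the other has
the form `L s + a s - c` with `c > 0` by the upper bound on `v`, so it has this property because
`L s / s` is monotone. The monotonicity of `L s / s` is Jensen's inequality for
`(e ^ s - 1) / s = ∫ u in 0..1, e ^ (s u)` (`logMean_div_mono`).
-/

open MeasureTheory in
/-- Jensen's inequality for `x ↦ x ^ p` and the mean of `u ↦ e ^ (s u)` over `[0, 1]`. -/
lemma expMean_rpow_le {s p : ℝ} (hs : 0 < s) (hp : 1 ≤ p) :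
    ((Real.exp s - 1) / s) ^ p ≤ (Real.exp (p * s) - 1) / (p * s) := by
  have key : ∀ a : ℝ, 0 < a →
      ∫ u in Set.Ioc (0 : ℝ) 1, Real.exp (a * u) = (Real.exp a - 1) / a := by
    intro a ha
    rw [← intervalIntegral.integral_of_le zero_le_one,
      intervalIntegral.integral_comp_mul_left (fun x => Real.exp x) ha.ne']
    simp [integral_exp]
    field_simp
  have h_integrable : ∀ a : ℝ, Integrable (fun u : ℝ => Real.exp (a * u))
      (volume.restrict (Set.Ioc (0 : ℝ) 1)) := by
    intro a
    have : Continuous (fun u : ℝ => Real.exp (a * u)) := by fun_prop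
    exact this.integrableOn_Ioc
  have : IsProbabilityMeasure (volume.restrict (Set.Ioc (0 : ℝ) 1)) := ⟨by simp⟩
  have hcomp : ((fun x : ℝ => x ^ p) ∘ fun u : ℝ => Real.exp (s * u))
      = fun u : ℝ => Real.exp (p * s * u) := by
    funext u
    simp only [Function.comp]
    rw [← Real.exp_mul]
    ring_nf
  have hJ := (convexOn_rpow hp).map_integral_le (μ := volume.restrict (Set.Ioc (0 : ℝ) 1))
    (f := fun u => Real.exp (s * u))
    (Real.continuous_rpow_const (by linarith)).continuousOn isClosed_Ici
    (Filter.Eventually.of_forall fun u => (Real.exp_pos _).le) (h_integrable s)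
    (by rw [hcomp]; exact h_integrable _)
  have hc : ∀ u : ℝ, Real.exp (s * u) ^ p = Real.exp (p * s * u) := fun u => congrFun hcomp u
  simp only [hc] at hJ
  rwa [key s hs, key (p * s) (by positivity)] at hJ

/-- The logarithm of the mean of `u ↦ e ^ (s u)` over `[0, 1]`. -/
noncomputable def logMean (s : ℝ) : ℝ := Real.log ((Real.exp s - 1) / s)

lemma expMean_pos {s : ℝ} (hs : 0 < s) : 0 < (Real.exp s - 1) / s :=
  div_pos (by linarith [Real.add_one_lt_exp hs.ne']) hs

lemma logMean_div_mono {s t : ℝ} (hs : 0 < s) (hst : s ≤ t) :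
    t * logMean s ≤ s * logMean t := by
  have h := expMean_rpow_le hs ((one_le_div hs).2 hst)
  rw [div_mul_cancel₀ _ hs.ne'] at h
  have h2 := Real.log_le_log (Real.rpow_pos_of_pos (expMean_pos hs) _) h
  rw [Real.log_rpow (expMean_pos hs), div_mul_eq_mul_div, div_le_iff₀ hs] at h2
  unfold logMean
  linarith

lemma logMean_mono {s t : ℝ} (hs : 0 < s) (hst : s ≤ t) : logMean s ≤ logMean t := by
  have h0 : 0 ≤ logMean s := by
    apply Real.log_nonneg
    rw [one_le_div hs]
    linarith [Real.add_one_lt_exp hs.ne']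
  have h := logMean_div_mono hs hst
  have : s * logMean s ≤ s * logMean t := by nlinarith
  exact le_of_mul_le_mul_left this hs

/-- The logarithmic form, after `r = z / (s + z)`, of both equilibrium equations; `A` is the
exponent in the denominator. -/
lemma equilibrium_iff {z s A : ℝ} (hz : 0 < z) (hs : 0 < s) :
    1 + (Real.exp (s + z) - 1) / ((s / z) * Real.exp A + 1) = Real.exp z ↔
      logMean s + z - logMean z = A := by
  have hM := expMean_pos hs
  have hE := expMean_pos hz
  have hden : 0 < (s / z) * Real.exp A + 1 := by positivity
  have h1 : logMean s + z - logMean z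
      = Real.log ((Real.exp s - 1) / s * Real.exp z / ((Real.exp z - 1) / z)) := by
    rw [Real.log_div (by positivity) hE.ne', Real.log_mul hM.ne' (Real.exp_pos z).ne',
      Real.log_exp]
    rfl
  have h2 : ∀ X : ℝ, 0 < X → (Real.log X = A ↔ X = Real.exp A) := fun X hX =>
    ⟨fun h => by rw [← h, Real.exp_log hX], fun h => by rw [h, Real.log_exp]⟩
  rw [h1, h2 _ (by positivity), div_eq_iff hE.ne', ← eq_sub_iff_add_eq',
    div_eq_iff hden.ne', Real.exp_add]
  field_simp
  constructor <;> intro h <;> linarith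

/-- The logarithmic gap `φ_B` in the Boston equilibrium equation, as a function of
`s = z (1 - r) / r`. -/
noncomputable def bostonGap (z w y v s : ℝ) : ℝ :=
  logMean s + z - logMean z + v * (s + z) - min (w + w * z / s) ((y + z) * (s + z) / z)

/-- The single-crossing property: `φ_B` stays positive after it becomes nonnegative. -/
lemma bostonGap_pos {z w y v s t : ℝ} (hz : 0 < z) (hw : 0 < w) (hy : 0 < y) (hv : 0 < v)
    (hvz : v * z < logMean z) (hs : 0 < s) (hst : s < t) (h : 0 ≤ bostonGap z w y v s) :
    0 < bostonGap z w y v t := by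
  have ht : 0 < t := hs.trans hst
  unfold bostonGap at *
  rw [sub_nonneg, min_le_iff] at h
  rw [sub_pos, min_lt_iff]
  rcases h with h | h
  · left
    have h1 : w * z / t < w * z / s := by gcongr
    have h2 := logMean_mono hs hst.le
    nlinarith
  · right
    -- this branch is `L s + a s - c` with `c = log ((e ^ z - 1) / z) - v z + y > 0`
    have e : ∀ x : ℝ, (y + z) * (x + z) / z = (y / z + 1) * x + y + z := by
      intro x; field_simp; ring
    rw [e] at h ⊢
    have h3 := logMean_div_mono hs hst.le
    have hc : 0 < logMean z - v * z + y := by linarith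
    have h4 := mul_le_mul_of_nonneg_left h ht.le
    have h5 := mul_lt_mul_of_pos_right hst hc
    refine lt_of_mul_lt_mul_left ?_ hs.le
    nlinarith

/-- If v ∈ (v̲, v̄) and r^D ∈ (r̂,1) satisfies H^D(r^D) = e^z,
then there is exactly one r^B ∈ (r̂,1) with H^B(r^B) = e^z, and r^B < r^D. -/
theorem boston_equilibrium_exists_unique_below_da
    (z w y v : ℝ) (hz : 0 < z) (hw : 0 < w) (hy : 0 < y)
    (hv : v ∈ Set.Ioo (0 : ℝ) 1)
    (hvlow : (1 / (z + w)) *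
      Real.log ((w / (1 - Real.exp (-w))) * (Real.exp z - 1) / z) < v)
    (hvbar : v < (1 / z) * Real.log ((Real.exp z - 1) / z))
    (rhat : ℝ) (hrhat : rhat = z / (z + w))
    (HD HB α : ℝ → ℝ)
    (hHD : ∀ r, HD r = 1 + (Real.exp (z / r) - 1) /
      (((1 - r) / r) * Real.exp (z * (1 - v) / r) + 1))
    (hα : ∀ r, α r = min (w / (1 - r)) ((y + z) / r))
    (hHB : ∀ r, HB r = 1 + (Real.exp (z / r) - 1) /
      (((1 - r) / r) * Real.exp (α r) * Real.exp (-(z * v) / r) + 1))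
    (rD : ℝ) (hrD : rD ∈ Set.Ioo rhat 1) (heqD : HD rD = Real.exp z) :
    ∃ rB ∈ Set.Ioo rhat 1, HB rB = Real.exp z ∧ rB < rD ∧
      ∀ r' ∈ Set.Ioo rhat 1, HB r' = Real.exp z → r' = rB := by
  have hvz : v * z < logMean z := by
    rw [one_div_mul_eq_div, lt_div_iff₀ hz] at hvbar
    exact hvbar
  have param : ∀ r ∈ Set.Ioo rhat 1, ∃ s, 0 < s ∧ s < w ∧ r = z / (s + z) := by
    rintro r ⟨h1, h2⟩
    have h0 : 0 < r := lt_trans (by rw [hrhat]; positivity) h1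
    refine ⟨z * (1 - r) / r, by have := sub_pos.2 h2; positivity, ?_, by field_simp; ring⟩
    rw [hrhat, div_lt_iff₀ (by positivity)] at h1
    rw [div_lt_iff₀ h0]
    linarith
  have hB : ∀ s, 0 < s → (HB (z / (s + z)) = Real.exp z ↔ bostonGap z w y v s = 0) := by
    intro s hs
    have hsz : 0 < s + z := by positivity
    have e0 : 1 - z / (s + z) = s / (s + z) := by field_simp; ring
    have e1 : z / (z / (s + z)) = s + z := by field_simp
    have e2 : (1 - z / (s + z)) / (z / (s + z)) = s / z := by rw [e0]; field_simp
    have e3 : w / (1 - z / (s + z)) = w + w * z / s := by rw [e0]; field_simp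
    have e4 : (y + z) / (z / (s + z)) = (y + z) * (s + z) / z := by field_simp
    have e5 : -(z * v) / (z / (s + z)) = -(v * (s + z)) := by field_simp
    rw [hHB, hα, e1, e2, e3, e4, e5, mul_assoc, ← Real.exp_add, equilibrium_iff hz hs]
    unfold bostonGap
    constructor <;> intro h <;> linarith
  obtain ⟨d, hd0, hdw, rfl⟩ := param rD hrD
  have hd : bostonGap z w y v d < 0 := by
    have hsz : 0 < d + z := by positivity
    have e1 : z / (z / (d + z)) = d + z := by field_simp
    have e2 : (1 - z / (d + z)) / (z / (d + z)) = d / z := by field_simp; ring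
    have e3 : z * (1 - v) / (z / (d + z)) = (1 - v) * (d + z) := by field_simp
    rw [hHD, e1, e2, e3, equilibrium_iff hz hd0] at heqD
    unfold bostonGap
    rw [sub_neg, lt_min_iff]
    have h1 : z < w * z / d := by rw [lt_div_iff₀ hd0]; nlinarith
    have h2 : (y + z) * (d + z) / z = y * (d + z) / z + (d + z) := by field_simp
    have h3 : 0 < y * (d + z) / z := by positivity
    constructor <;> linarith
  have hgw : 0 < bostonGap z w y v w := by
    rw [one_div_mul_eq_div, div_lt_iff₀ (by positivity)] at hvlow
    have hMw := expMean_pos hw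
    have hMz := expMean_pos hz
    have e1 : w / (1 - Real.exp (-w)) * (Real.exp z - 1) / z
        = (Real.exp z - 1) / z * Real.exp w / ((Real.exp w - 1) / w) := by
      have : Real.exp w - 1 ≠ 0 := by linarith [Real.add_one_lt_exp hw.ne']
      rw [Real.exp_neg]
      field_simp
    rw [e1, Real.log_div (by positivity) hMw.ne', Real.log_mul hMz.ne' (Real.exp_pos w).ne',
      Real.log_exp] at hvlow
    change logMean z + w - logMean w < _ at hvlow
    unfold bostonGap
    have e2 : w + w * z / w = w + z := by field_simp
    rw [e2]
    have := min_le_left (w + z) ((y + z) * (w + z) / z)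
    linarith
  have hcont : ContinuousOn (bostonGap z w y v) (Set.Icc d w) := by
    have hpos : ∀ x ∈ Set.Icc d w, x ≠ 0 := fun x hx => (hd0.trans_le hx.1).ne'
    have hL : ContinuousOn logMean (Set.Icc d w) := by
      unfold logMean
      refine ContinuousOn.log (ContinuousOn.div (by fun_prop) (by fun_prop) hpos) ?_
      exact fun x hx => (expMean_pos (hd0.trans_le hx.1)).ne'
    have h2 : ContinuousOn (fun s => w * z / s) (Set.Icc d w) :=
      ContinuousOn.div (by fun_prop) (by fun_prop) hpos
    unfold bostonGap
    fun_prop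
  obtain ⟨b, ⟨hb1, hb2⟩, hb⟩ := intermediate_value_Ioo hdw.le hcont ⟨hd, hgw⟩
  have hb0 : 0 < b := hd0.trans hb1
  refine ⟨z / (b + z), ⟨?_, ?_⟩, (hB b hb0).2 hb, ?_, ?_⟩
  · rw [hrhat, add_comm z w]
    gcongr
  · rw [div_lt_one (by positivity)]
    linarith
  · gcongr
  · intro r' hr' h
    obtain ⟨s, hs0, -, rfl⟩ := param r' hr'
    rw [hB s hs0] at h
    rcases lt_trichotomy s b with hlt | rfl | hlt
    · exact absurd hb (bostonGap_pos hz hw hy hv.1 hvz hs0 hlt h.ge).ne'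
    · rfl
    · exact absurd h (bostonGap_pos hz hw hy hv.1 hvz hb0 hlt hb.ge).ne'
end

section
/- Let z > 0, λ_s > 0, and 0 < r_B < r_D < 1. For r ∈ (0,1) and θ ∈ [0,1] define h(θ,r) := e^{−zθ/r}·(e^{z/r} − e^z)/(e^z − 1) and g_r(θ) := (λ_s/r)·(1 + h(θ,r))^{−1}. Then g_{r_B} single-crosses g_{r_D} from below: for all 0 ≤ θ' < θ'' ≤ 1, if g_{r_B}(θ') ≥ g_{r_D}(θ') then g_{r_B}(θ'') > g_{r_D}(θ''). -/
/-!
Since `g r θ = lamS / (r * (1 + h θ r))`, the inequality `g rD θ ≤ g rB θ` says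
`rB * (1 + h θ rB) ≤ rD * (1 + h θ rD)`. Raising `θ` by `d > 0` multiplies `h θ r ≥ 0` by
`exp (-(z * d) / r)`, a factor in `(0, 1)` that is smaller for `rB` than for `rD`. Writing `u < v < 1`
for the two factors, `rB * h θ rB * u ≤ (rD - rB + rD * h θ rD) * u < (rD - rB) + rD * h θ rD * v`,
which is the strict inequality at `θ + d`.
-/

/-- The Boston equilibrium allocation density g_{r_B}
single-crosses the DA density g_{r_D} from below. -/
theorem boston_density_single_crosses_da_from_below
    (z lamS rB rD : ℝ) (hz : 0 < z) (hS : 0 < lamS)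
    (h0 : 0 < rB) (hBD : rB < rD) (hD1 : rD < 1)
    (h : ℝ → ℝ → ℝ) (g : ℝ → ℝ → ℝ)
    (hh : ∀ θ r, h θ r =
      Real.exp (-(z * θ) / r) * (Real.exp (z / r) - Real.exp z) /
        (Real.exp z - 1))
    (hg : ∀ r θ, g r θ = (lamS / r) * (1 + h θ r)⁻¹) :
    ∀ θ' θ'', 0 ≤ θ' → θ' < θ'' → θ'' ≤ 1 →
      g rB θ' ≥ g rD θ' → g rB θ'' > g rD θ'' := by
  intro θ' θ'' _ hlt _ hge
  have hz1 : 0 < Real.exp z - 1 := by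
    have := Real.one_lt_exp_iff.2 hz
    linarith
  have hDpos : 0 < rD := h0.trans hBD
  have hnonneg : ∀ θ r, 0 < r → r < 1 → 0 ≤ h θ r := by
    intro θ r hr hr1
    rw [hh]
    have hzr : z ≤ z / r := by
      rw [le_div_iff₀ hr]
      nlinarith
    have := Real.exp_le_exp.2 hzr
    exact div_nonneg (mul_nonneg (Real.exp_pos _).le (by linarith)) hz1.le
  have hshift : ∀ r, h θ'' r = h θ' r * Real.exp (-(z * (θ'' - θ') / r)) := by
    intro r
    have he : Real.exp (-(z * θ'') / r) =
        Real.exp (-(z * θ') / r) * Real.exp (-(z * (θ'' - θ') / r)) := by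
      rw [← Real.exp_add]
      congr 1
      ring
    rw [hh, hh, he]
    ring
  have hform : ∀ r θ, g r θ = lamS / (r * (1 + h θ r)) := by
    intro r θ
    rw [hg, ← div_eq_mul_inv, div_div]
  have hd : 0 < z * (θ'' - θ') := mul_pos hz (sub_pos.2 hlt)
  have hB := hnonneg θ' rB h0 (hBD.trans hD1)
  have hD := hnonneg θ' rD hDpos hD1
  have hB2 := hnonneg θ'' rB h0 (hBD.trans hD1)
  have hu0 : 0 < Real.exp (-(z * (θ'' - θ') / rB)) := Real.exp_pos _
  have huv : Real.exp (-(z * (θ'' - θ') / rB)) < Real.exp (-(z * (θ'' - θ') / rD)) :=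
    Real.exp_lt_exp.2 (neg_lt_neg (div_lt_div_of_pos_left hd h0 hBD))
  have hv1 : Real.exp (-(z * (θ'' - θ') / rD)) < 1 :=
    Real.exp_lt_one_iff.2 (neg_lt_zero.2 (div_pos hd hDpos))
  rw [ge_iff_le, hform, hform,
    div_le_div_iff_of_pos_left hS (by positivity) (by positivity)] at hge
  rw [gt_iff_lt, hform, hform]
  apply div_lt_div_of_pos_left hS (by positivity)
  rw [hshift rB, hshift rD]
  generalize Real.exp (-(z * (θ'' - θ') / rB)) = u at *
  generalize Real.exp (-(z * (θ'' - θ') / rD)) = v at *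
  have h1 : rB * h θ' rB * u ≤ (rD - rB + rD * h θ' rD) * u :=
    mul_le_mul_of_nonneg_right (by linarith) hu0.le
  have h2 : (rD - rB) * u < (rD - rB) * 1 :=
    mul_lt_mul_of_pos_left (huv.trans hv1) (sub_pos.2 hBD)
  have h3 : rD * h θ' rD * u ≤ rD * h θ' rD * v :=
    mul_le_mul_of_nonneg_left huv.le (mul_nonneg hDpos.le hD)
  linarith
end

section
/- Let z > 0, λ_s > 0, and 0 < r_B < r_D < 1. With h(θ,r) := e^{−zθ/r}·(e^{z/r} − e^z)/(e^z − 1) and g_r(θ) := (λ_s/r)·(1 + h(θ,r))^{−1}, one has ∫_0^θ̄ g_{r_D}(θ) dθ > ∫_0^θ̄ g_{r_B}(θ) dθ for every θ̄ ∈ (0,1). (The DA equilibrium allocation of school s is first-order stochastically dominated by the Boston allocation, i.e. the DA mechanism is less efficient.) -/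
/-!
With `A = (e^{z/r} - e^z)/(e^z - 1)`, the density `(λ/r) (1 + A e^{-zθ/r})⁻¹` has antiderivative
`(λ/z) log (e^{zθ/r} + A)`, so its integral over `[0, t]` is
`(λ/z) log (1 + (e^z - 1) (u^t - 1)/(u - 1))` with `u = e^{z/r}` (`integral_density`).
The quotient `(u^t - 1)/(u - 1)` is the slope of the secant of `x ↦ x^t` from `1` to `u`; as this
map is strictly concave for `0 < t < 1`, the slope strictly decreases in `u` (`secant_lt`), hence
strictly increases in `r`.
-/

/-- The cumulative mass on `[0, t]` in closed form. -/
lemma integral_density (z lamS r t : ℝ) (hz : 0 < z) (hr : 0 < r) (hr1 : r < 1) :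
    ∫ θ in (0 : ℝ)..t, (lamS / r) * (1 + Real.exp (-(z * θ) / r) *
        (Real.exp (z / r) - Real.exp z) / (Real.exp z - 1))⁻¹ =
      lamS / z * Real.log (1 + (Real.exp z - 1) *
        ((Real.exp (z * t / r) - 1) / (Real.exp (z / r) - 1))) := by
  have hz1 : 0 < Real.exp z - 1 := by simpa using hz
  have hzr : z < z / r := by rw [lt_div_iff₀ hr]; nlinarith
  have hA : 0 < (Real.exp (z / r) - Real.exp z) := by
    simpa using hzr
  have hu1 : 0 < Real.exp (z / r) - 1 := by linarith
  have hB : 0 < (Real.exp (z / r) - Real.exp z) / (Real.exp z - 1) := div_pos hA hz1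
  have hpos : ∀ θ : ℝ, 0 < Real.exp (z * θ / r) +
      (Real.exp (z / r) - Real.exp z) / (Real.exp z - 1) := fun θ => by positivity
  have hne : ∀ θ : ℝ, 1 + Real.exp (-(z * θ) / r) *
      (Real.exp (z / r) - Real.exp z) / (Real.exp z - 1) ≠ 0 := fun θ => by positivity
  rw [intervalIntegral.integral_eq_sub_of_hasDerivAt
    (f := fun θ => lamS / z * Real.log (Real.exp (z * θ / r) +
      (Real.exp (z / r) - Real.exp z) / (Real.exp z - 1)))]
  · rw [← mul_sub, ← Real.log_div (hpos _).ne' (hpos _).ne']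
    congr 2
    have h0 := (hpos 0).ne'
    simp only [mul_zero, zero_div, Real.exp_zero] at h0 ⊢
    have e : 1 + (Real.exp (z / r) - Real.exp z) / (Real.exp z - 1) =
        (Real.exp (z / r) - 1) / (Real.exp z - 1) := by
      field_simp; ring
    rw [e]
    field_simp
    ring
  · intro θ _
    have h1 : HasDerivAt (fun θ : ℝ => z * θ / r) (z / r) θ := by
      simpa using ((hasDerivAt_id θ).const_mul z).div_const r
    have h2 := (((h1.exp.add_const
      ((Real.exp (z / r) - Real.exp z) / (Real.exp z - 1))).log (hpos θ).ne').const_mul (lamS / z))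
    refine h2.congr_deriv (Eq.symm ?_)
    have hp := (hpos θ).ne'
    have hn := hne θ
    rw [neg_div, Real.exp_neg] at hn ⊢
    have hE := Real.exp_pos (z * θ / r)
    have e : 1 + (Real.exp (z * θ / r))⁻¹ * (Real.exp (z / r) - Real.exp z) / (Real.exp z - 1) =
        (Real.exp (z * θ / r) + (Real.exp (z / r) - Real.exp z) / (Real.exp z - 1)) /
          Real.exp (z * θ / r) := by
      field_simp
    rw [e, inv_div]
    generalize Real.exp (z * θ / r) + (Real.exp (z / r) - Real.exp z) / (Real.exp z - 1) = w at *
    field_simp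
  · apply Continuous.intervalIntegrable
    exact continuous_const.mul (Continuous.inv₀ (by fun_prop) hne)

/-- Strict concavity of `x ↦ x ^ t`, read in the variable `x = e^a`. -/
lemma secant_lt (t a b : ℝ) (ht : 0 < t) (ht1 : t < 1) (ha : 0 < a) (hab : a < b) :
    (Real.exp (b * t) - 1) / (Real.exp b - 1) < (Real.exp (a * t) - 1) / (Real.exp a - 1) := by
  have ha1 : 1 < Real.exp a := by simpa using ha
  have hb1 : 1 < Real.exp b := by simpa using ha.trans hab
  have key := (Real.strictConcaveOn_rpow ht ht1).secant_strict_mono (a := 1) (x := Real.exp a)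
    (y := Real.exp b) (by simp) (Real.exp_pos a).le (Real.exp_pos b).le ha1.ne' hb1.ne'
    (Real.exp_lt_exp.2 hab)
  simpa [← Real.exp_mul] using key

/-- The DA equilibrium allocation is first-order
stochastically dominated by the Boston allocation:
∫_0^θ̄ g_{r_D} > ∫_0^θ̄ g_{r_B} for every θ̄ ∈ (0,1). -/
theorem da_allocation_fosd_dominated_by_boston
    (z lamS rB rD : ℝ) (hz : 0 < z) (hS : 0 < lamS)
    (h0 : 0 < rB) (hBD : rB < rD) (hD1 : rD < 1)
    (h : ℝ → ℝ → ℝ) (g : ℝ → ℝ → ℝ)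
    (hh : ∀ θ r, h θ r =
      Real.exp (-(z * θ) / r) * (Real.exp (z / r) - Real.exp z) /
        (Real.exp z - 1))
    (hg : ∀ r θ, g r θ = (lamS / r) * (1 + h θ r)⁻¹) :
    ∀ θbar ∈ Set.Ioo (0 : ℝ) 1,
      (∫ θ in (0 : ℝ)..θbar, g rD θ) > ∫ θ in (0 : ℝ)..θbar, g rB θ := by
  rintro t ⟨ht, ht1⟩
  have hD0 : 0 < rD := h0.trans hBD
  simp only [hg, hh]
  rw [integral_density z lamS rD t hz hD0 hD1,
    integral_density z lamS rB t hz h0 (hBD.trans hD1)]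
  have hz1 : 0 < Real.exp z - 1 := by simpa using hz
  have key := secant_lt t (z / rD) (z / rB) ht ht1 (by positivity)
    (div_lt_div_of_pos_left hz h0 hBD)
  rw [div_mul_eq_mul_div, div_mul_eq_mul_div] at key
  have hq : 0 < (Real.exp (z * t / rB) - 1) / (Real.exp (z / rB) - 1) := by
    apply div_pos
    · have : 0 < z * t / rB := by positivity
      simpa using this
    · have : 0 < z / rB := by positivity
      simpa using this
  have hlog := Real.log_lt_log (by positivity)
    (add_lt_add_right (mul_lt_mul_of_pos_left key hz1) 1)
  exact mul_lt_mul_of_pos_left hlog (by positivity)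
end

section
/- Let z > 0 and 0 < r_B < r_D < 1. For r ∈ (0,1) define h(θ,r) := e^{−zθ/r}·(e^{z/r} − e^z)/(e^z − 1) and D_r(θ) := (z/r)·h(θ,r)/(1 + h(θ,r))², which is the derivative in θ of m_r(θ) := (1 + h(θ,r))^{−1}. Then D_{r_B} single-crosses D_{r_D} from below: for all 0 ≤ θ' < θ'' ≤ 1, if D_{r_D}(θ') ≤ D_{r_B}(θ') then D_{r_D}(θ'') < D_{r_B}(θ''). -/
/-!
With `a = z / r` the slope is `D_r = 1 / G_a ^ 2`, where `G_a θ = p e^{aθ/2} + q e^{-aθ/2}` for some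
positive `p, q` (a rescaled and translated `cosh`). Hence comparing slopes amounts to determining
the sign of `F = G_a - G_b`, where `a = z / rB > b = z / rD > z`.

* At `θ = 1`, up to a factor depending only on `z`, the slope equals
  `a / (1 - e^{-a}) * ((e^a - e^z) / (e^a - 1))`, a product of two positive strictly increasing
  functions of `a`; so `F 1 < 0` (`rateSlope_one_lt`).
* The identity `G_a (x + t) + G_a (x - t) = 2 cosh (a t / 2) G_a x` shows that `F` has no interior
  maximum at which it is nonnegative (`expPair_neg_of_endpoints`). As `F θ' ≤ 0` and `F 1 < 0`,
  it follows that `F < 0` on `(θ', 1]`.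
-/

/-- The function `p e^{αx} + q e^{-αx}`, a solution of `y'' = α² y`. -/
noncomputable def expPair (p q α x : ℝ) : ℝ := p * Real.exp (α * x) + q * Real.exp (-(α * x))

lemma expPair_pos {p q : ℝ} (hp : 0 < p) (hq : 0 < q) (α x : ℝ) : 0 < expPair p q α x := by
  unfold expPair; positivity

lemma expPair_add_sub (p q α x t : ℝ) :
    expPair p q α (x + t) + expPair p q α (x - t) = 2 * Real.cosh (α * t) * expPair p q α x := by
  unfold expPair
  rw [Real.cosh_eq, show α * (x + t) = α * x + α * t by ring,
    show α * (x - t) = α * x + -(α * t) by ring, neg_add, neg_add, neg_neg]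
  simp only [Real.exp_add]
  ring

/-- Maximum principle: the difference of two such functions, the minuend having the larger rate,
is negative inside an interval as soon as it is nonpositive at the left endpoint and negative at
the right one. -/
lemma expPair_neg_of_endpoints {p q p' q' α β u v w : ℝ} (hp : 0 < p) (hq : 0 < q)
    (hβ : 0 < β) (hαβ : β < α) (huv : u < v) (hvw : v < w)
    (hu : expPair p q α u ≤ expPair p' q' β u) (hw : expPair p q α w < expPair p' q' β w) :
    expPair p q α v < expPair p' q' β v := by
  by_contra! hv
  set F : ℝ → ℝ := fun x => expPair p q α x - expPair p' q' β x with hF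
  have hcont : Continuous F := by
    simp only [hF, expPair]; fun_prop
  -- a maximizer can be chosen in the open interval, with nonnegative value
  obtain ⟨x, hux, hxw, hx0, hmax⟩ :
      ∃ x, u < x ∧ x < w ∧ 0 ≤ F x ∧ ∀ y ∈ Set.Icc u w, F y ≤ F x := by
    have hFv : 0 ≤ F v := by simp only [hF]; linarith
    have hFu : F u ≤ 0 := by simp only [hF]; linarith
    have hFw : F w < 0 := by simp only [hF]; linarith
    obtain ⟨x, hx, hm⟩ := isCompact_Icc.exists_isMaxOn
      (Set.nonempty_Icc.2 (huv.trans hvw).le) hcont.continuousOn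
    have hm : ∀ y ∈ Set.Icc u w, F y ≤ F x := fun y hy => hm hy
    have hvx := hm v ⟨huv.le, hvw.le⟩
    rcases eq_or_lt_of_le hx.1 with rfl | hux
    · exact ⟨v, huv, hvw, hFv, fun y hy => (hm y hy).trans (hFu.trans hFv)⟩
    · rcases eq_or_lt_of_le hx.2 with rfl | hxw
      · linarith
      · exact ⟨x, hux, hxw, hFv.trans hvx, hm⟩
  obtain ⟨t, ht, htu, htw⟩ : ∃ t, 0 < t ∧ t ≤ x - u ∧ t ≤ w - x :=
    ⟨min (x - u) (w - x), lt_min (by linarith) (by linarith), min_le_left _ _, min_le_right _ _⟩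
  have h1 := hmax (x + t) ⟨by linarith, by linarith⟩
  have h2 := hmax (x - t) ⟨by linarith, by linarith⟩
  have e1 := expPair_add_sub p q α x t
  have e2 := expPair_add_sub p' q' β x t
  have hA := expPair_pos hp hq α x
  have hc : Real.cosh (β * t) < Real.cosh (α * t) := by
    rw [Real.cosh_lt_cosh, abs_of_pos (by positivity),
      abs_of_pos (mul_pos (hβ.trans hαβ) ht)]
    exact mul_lt_mul_of_pos_right hαβ ht
  have hc1 := Real.one_le_cosh (β * t)
  simp only [hF] at h1 h2 hx0
  nlinarith [mul_lt_mul_of_pos_right hc hA, mul_nonneg (sub_nonneg.2 hc1) hx0]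

/-- `x ↦ x / (1 - e^{-x})` is strictly increasing on the positive reals. -/
lemma div_one_sub_exp_neg_lt {a b : ℝ} (hb : 0 < b) (hab : b < a) :
    b / (1 - Real.exp (-b)) < a / (1 - Real.exp (-a)) := by
  have hb1 : Real.exp (-b) < 1 := Real.exp_lt_one_iff.2 (by linarith)
  have ha1 : Real.exp (-a) < 1 := Real.exp_lt_one_iff.2 (by linarith)
  rw [div_lt_div_iff₀ (by linarith) (by linarith)]
  have e : Real.exp (-a) = Real.exp (-b) * Real.exp (-(a - b)) := by
    rw [← Real.exp_add]; ring_nf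
  have e' : Real.exp (-b) * Real.exp b = 1 := by rw [← Real.exp_add]; simp
  have h1 := Real.add_one_le_exp (-(a - b))
  have h2 := Real.add_one_lt_exp hb.ne'
  have hpos := Real.exp_pos (-b)
  -- after multiplication by `e^b`, with `d = a - b`: `d + b (1 - e^{-d}) ≤ d (1 + b) < d e^b`
  have key : a - b * Real.exp (-(a - b)) < (a - b) * Real.exp b := by
    nlinarith [mul_le_mul_of_nonneg_left h1 hb.le, mul_lt_mul_of_pos_left h2 (sub_pos.2 hab)]
  have := mul_lt_mul_of_pos_left key hpos
  rw [e]
  linear_combination this + (a - b) * e'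

/-- The amplitude `(e^a - e^z) / (e^z - 1)`, so that `h(θ, r) = e^{-aθ} * amp z a` for `a = z / r`. -/
noncomputable def amp (z a : ℝ) : ℝ := (Real.exp a - Real.exp z) / (Real.exp z - 1)

lemma amp_pos {z a : ℝ} (hz : 0 < z) (ha : z < a) : 0 < amp z a :=
  div_pos (sub_pos.2 (Real.exp_lt_exp.2 ha)) (sub_pos.2 (Real.one_lt_exp_iff.2 hz))

/-- The slope `D_r θ` in terms of the rate `a = z / r`. -/
noncomputable def rateSlope (z a θ : ℝ) : ℝ :=
  a * (Real.exp (-(a * θ)) * amp z a) / (1 + Real.exp (-(a * θ)) * amp z a) ^ 2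

lemma rateSlope_one {z a : ℝ} (hz : 0 < z) (ha : z < a) :
    rateSlope z a 1 = (Real.exp z - 1) / Real.exp z ^ 2 *
      (a / (1 - Real.exp (-a)) * (1 - (Real.exp z - 1) / (Real.exp a - 1))) := by
  have h1 : 1 < Real.exp z := Real.one_lt_exp_iff.2 hz
  have h2 : Real.exp z < Real.exp a := Real.exp_lt_exp.2 ha
  unfold rateSlope amp
  rw [mul_one, Real.exp_neg]
  generalize Real.exp z = Z at *
  generalize Real.exp a = A at *
  have hZ : Z - 1 ≠ 0 := by linarith
  have hZ0 : Z ≠ 0 := by linarith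
  have hA : A - 1 ≠ 0 := by linarith
  have hA0 : A ≠ 0 := by linarith
  have e1 : 1 + A⁻¹ * ((A - Z) / (Z - 1)) = Z * (A - 1) / (A * (Z - 1)) := by
    field_simp; ring
  have e2 : 1 - A⁻¹ = (A - 1) / A := by field_simp
  rw [e1, e2]
  field_simp
  ring

lemma rateSlope_one_lt {z a b : ℝ} (hz : 0 < z) (hb : z < b) (hab : b < a) :
    rateSlope z b 1 < rateSlope z a 1 := by
  rw [rateSlope_one hz hb, rateSlope_one hz (hb.trans hab)]
  have h1 : 1 < Real.exp z := Real.one_lt_exp_iff.2 hz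
  have h2 : Real.exp z < Real.exp b := Real.exp_lt_exp.2 hb
  have h3 : Real.exp b < Real.exp a := Real.exp_lt_exp.2 hab
  have hb1 : Real.exp (-b) < 1 := Real.exp_lt_one_iff.2 (by linarith)
  have hlt : (Real.exp z - 1) / (Real.exp b - 1) < 1 := by
    rw [div_lt_one (by linarith)]; linarith
  refine mul_lt_mul_of_pos_left ?_ (div_pos (by linarith) (by positivity))
  refine mul_lt_mul'' (div_one_sub_exp_neg_lt (hz.trans hb) hab) ?_ ?_ (by linarith)
  · exact sub_lt_sub_left (div_lt_div_of_pos_left (by linarith) (by linarith) (by linarith)) 1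
  · exact div_nonneg (hz.trans hb).le (by linarith)

/-- `D = 1 / G²` with `G = (1 + h) / √(a h)`. -/
lemma rateSlope_eq {z a : ℝ} (hz : 0 < z) (ha : z < a) (θ : ℝ) :
    rateSlope z a θ =
      1 / expPair (1 / √(a * amp z a)) (amp z a / √(a * amp z a)) (a / 2) θ ^ 2 := by
  have hK := amp_pos hz ha
  have ha0 : 0 < a := hz.trans ha
  unfold rateSlope expPair
  generalize amp z a = K at *
  have hs : √(a * K) ^ 2 = a * K := Real.sq_sqrt (by positivity)
  have hs0 : 0 < √(a * K) := Real.sqrt_pos.2 (by positivity)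
  generalize √(a * K) = s at *
  have he : Real.exp (-(a * θ)) = (Real.exp (a / 2 * θ))⁻¹ ^ 2 := by
    rw [← Real.exp_neg, ← Real.exp_nat_mul]; congr 1; push_cast; ring
  have hE := Real.exp_pos (a / 2 * θ)
  rw [he, Real.exp_neg]
  generalize Real.exp (a / 2 * θ) = E at *
  have e1 : 1 + E⁻¹ ^ 2 * K = (E ^ 2 + K) / E ^ 2 := by field_simp
  have e2 : 1 / s * E + K / s * E⁻¹ = (E ^ 2 + K) / (s * E) := by field_simp
  have hne : E ^ 2 + K ≠ 0 := by positivity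
  rw [e1, e2, div_pow, div_pow, mul_pow, hs]
  field_simp

/-- The slope D_{r_B} of the Boston equilibrium strategy
single-crosses the DA slope D_{r_D} from below. -/
theorem boston_learning_single_crosses_da_from_below
    (z rB rD : ℝ) (hz : 0 < z)
    (h0 : 0 < rB) (hBD : rB < rD) (hD1 : rD < 1)
    (h : ℝ → ℝ → ℝ) (D : ℝ → ℝ → ℝ)
    (hh : ∀ θ r, h θ r =
      Real.exp (-(z * θ) / r) * (Real.exp (z / r) - Real.exp z) /
        (Real.exp z - 1))
    (hD : ∀ r θ, D r θ = (z / r) * h θ r / (1 + h θ r) ^ 2) :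
    ∀ θ' θ'', 0 ≤ θ' → θ' < θ'' → θ'' ≤ 1 →
      D rD θ' ≤ D rB θ' → D rD θ'' < D rB θ'' := by
  have hrD : 0 < rD := h0.trans hBD
  have hb : z < z / rD := by rw [lt_div_iff₀ hrD]; nlinarith
  have hab : z / rD < z / rB := div_lt_div_of_pos_left hz h0 hBD
  have hDs : ∀ r θ, D r θ = rateSlope z (z / r) θ := by
    intro r θ
    have : h θ r = Real.exp (-(z / r * θ)) * amp z (z / r) := by
      rw [hh, amp, mul_div_assoc]; congr 2; ring
    rw [hD, this, rateSlope]
  intro θ' θ'' _ hlt hle1 hle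
  rw [hDs, hDs] at hle ⊢
  have hone := rateSlope_one_lt hz hb hab
  rcases eq_or_lt_of_le hle1 with rfl | hlt1
  · exact hone
  have ha := hb.trans hab
  rw [rateSlope_eq hz hb, rateSlope_eq hz ha] at hle hone ⊢
  generalize z / rD = b at *
  generalize z / rB = a at *
  have hKa := amp_pos hz ha
  have hKb := amp_pos hz hb
  have ha0 : 0 < a := hz.trans ha
  have hb0 : 0 < b := hz.trans hb
  have hp : 0 < 1 / √(a * amp z a) := by positivity
  have hq : 0 < amp z a / √(a * amp z a) := by positivity
  have hp' : 0 < 1 / √(b * amp z b) := by positivity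
  have hq' : 0 < amp z b / √(b * amp z b) := by positivity
  have hGa := expPair_pos hp hq (a / 2)
  have hGb := expPair_pos hp' hq' (b / 2)
  rw [one_div_le_one_div (pow_pos (hGb _) 2) (pow_pos (hGa _) 2),
    pow_le_pow_iff_left₀ (hGa _).le (hGb _).le two_ne_zero] at hle
  rw [one_div_lt_one_div (pow_pos (hGb _) 2) (pow_pos (hGa _) 2),
    pow_lt_pow_iff_left₀ (hGa _).le (hGb _).le two_ne_zero] at hone ⊢
  exact expPair_neg_of_endpoints hp hq (by linarith) (by linarith) hlt hlt1 hle hone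
end

section
/- Let α > 0 and β_1 < β_2 be reals. Suppose L_1 > 0 and L_2 > 0 satisfy the consistency equations ∫_0^1 (e^{−α(θ+β_i)} + L_i)^{−1} dθ = 1/(L_i + 1) for i = 1, 2. Then L_1 < L_2. (The equilibrium likelihood ratio of sab versus asb reports is strictly increasing in the payoff shift β; in particular, since the DA payoff gain corresponds to a larger β than the Boston gain at the same r, more students report sab under DA.) -/
/-!
Put `x = exp (-(α (θ + β)))`. Since `(L + 1) / (x + L) - 1 = (1 - x) / (x + L)`, consistency says
that `∫ (1 - x) / (x + L) = 0`. The integrand is strictly decreasing in `x`, hence strictly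
increasing in `β`. For the dependence on `L`, when `M ≤ L` the pointwise bound
`(1 - y) / (y + L) ≤ (1 + M) / (1 + L) * ((1 - y) / (y + M))` holds, because the difference of the
cross-multiplied sides is `(L - M) (1 - y)²`. So if `L₂ ≤ L₁`, integrating both comparisons turns
the consistency equation at `(β₂, L₂)` into a strict inequality contradicting the one at
`(β₁, L₁)`.
-/

/-- The two comparisons combined, solved for `(x + L)⁻¹`. When `(y + M)⁻¹` integrates to
`1 / (M + 1)`, the second summand on the right integrates to zero. -/
lemma inv_lt_of_shift {x y L M : ℝ} (hy : 0 < y) (hyx : y < x) (hM : 0 < M) (hML : M ≤ L) :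
    (x + L)⁻¹ < 1 / (L + 1) + (M + 1) / (L + 1) ^ 2 * ((M + 1) * (y + M)⁻¹ - 1) := by
  have hL : 0 < L := hM.trans_le hML
  have hlt : (x + L)⁻¹ < (y + L)⁻¹ := by
    apply inv_strictAnti₀ <;> linarith
  have hdiff : 1 / (L + 1) + (M + 1) / (L + 1) ^ 2 * ((M + 1) * (y + M)⁻¹ - 1) - (y + L)⁻¹
      = (L - M) * (1 - y) ^ 2 / ((L + 1) ^ 2 * (y + M) * (y + L)) := by
    have h1 : L + 1 ≠ 0 := by positivity
    have h2 : y + M ≠ 0 := by positivity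
    have h3 : y + L ≠ 0 := by positivity
    field_simp
    ring
  have hnonneg : 0 ≤ (L - M) * (1 - y) ^ 2 / ((L + 1) ^ 2 * (y + M) * (y + L)) := by
    have : 0 ≤ L - M := sub_nonneg.2 hML
    positivity
  linarith

lemma continuous_inv_exp_add (α β L : ℝ) (hL : 0 < L) :
    Continuous fun θ : ℝ => (Real.exp (-(α * (θ + β))) + L)⁻¹ := by
  apply Continuous.inv₀
  · fun_prop
  · intro θ
    positivity

/-- The equilibrium likelihood ratio of sab versus asb reports
is strictly increasing in the payoff shift β. -/
theorem likelihood_ratio_increasing_in_shift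
    (α β₁ β₂ L₁ L₂ : ℝ) (hα : 0 < α) (hβ : β₁ < β₂)
    (hL1 : 0 < L₁) (hL2 : 0 < L₂)
    (h1 : (∫ θ in (0 : ℝ)..1, (Real.exp (-(α * (θ + β₁))) + L₁)⁻¹) =
      1 / (L₁ + 1))
    (h2 : (∫ θ in (0 : ℝ)..1, (Real.exp (-(α * (θ + β₂))) + L₂)⁻¹) =
      1 / (L₂ + 1)) :
    L₁ < L₂ := by
  by_contra! hle
  have c1 := continuous_inv_exp_add α β₁ L₁ hL1
  have c2 := continuous_inv_exp_add α β₂ L₂ hL2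
  have hpt : ∀ θ : ℝ, (Real.exp (-(α * (θ + β₁))) + L₁)⁻¹ < 1 / (L₁ + 1) +
      (L₂ + 1) / (L₁ + 1) ^ 2 * ((L₂ + 1) * (Real.exp (-(α * (θ + β₂))) + L₂)⁻¹ - 1) := by
    intro θ
    refine inv_lt_of_shift (Real.exp_pos _) (Real.exp_lt_exp.2 ?_) hL2 hle
    nlinarith
  have cS : Continuous fun θ : ℝ => (L₂ + 1) * (Real.exp (-(α * (θ + β₂))) + L₂)⁻¹ :=
    continuous_const.mul c2
  have cT : Continuous fun θ : ℝ => (L₂ + 1) / (L₁ + 1) ^ 2 *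
      ((L₂ + 1) * (Real.exp (-(α * (θ + β₂))) + L₂)⁻¹ - 1) :=
    continuous_const.mul (cS.sub continuous_const)
  have cR : Continuous fun θ : ℝ => 1 / (L₁ + 1) + (L₂ + 1) / (L₁ + 1) ^ 2 *
      ((L₂ + 1) * (Real.exp (-(α * (θ + β₂))) + L₂)⁻¹ - 1) :=
    continuous_const.add cT
  have hint := intervalIntegral.integral_lt_integral_of_continuousOn_of_le_of_exists_lt
    (zero_lt_one' ℝ) c1.continuousOn cR.continuousOn (fun θ _ => (hpt θ).le)
    ⟨0, by simp, hpt 0⟩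
  have hne : L₂ + 1 ≠ 0 := by positivity
  rw [intervalIntegral.integral_add (by simp) (cT.intervalIntegrable _ _),
    intervalIntegral.integral_const_mul,
    intervalIntegral.integral_sub (cS.intervalIntegrable _ _) (by simp),
    intervalIntegral.integral_const_mul, h1, h2, mul_one_div_cancel hne] at hint
  simp at hint
end

section
/- Let α > 0, β_1 < β_2, 0 < L_1 < L_2, and λ_s > 0. Define g_i(θ) := λ_s·(L_i + 1)/(L_i + e^{−α(θ+β_i)}) for i = 1, 2 and θ ∈ [0,1]. Then g_1 single-crosses g_2 from below: for all 0 ≤ θ' < θ'' ≤ 1, if g_1(θ') ≥ g_2(θ') then g_1(θ'') > g_2(θ''). (Switching from the Boston payoff shift β_1 to the larger DA shift β_2, while the likelihood ratio rises from L_1 to L_2, yields a less efficient allocation of school s.) -/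
/-!
With `x = exp (-α θ)` and `bᵢ = exp (-α βᵢ)`, clearing denominators turns `g₁ θ ≥ g₂ θ` into
`(L₂ - L₁) + x * ((L₁ + 1) * b₂ - (L₂ + 1) * b₁) ≥ 0`. The coefficient of `x` is negative because
`b₂ < b₁` and `L₁ < L₂`, and `x` strictly decreases in `θ`, so the left side strictly increases.
-/

/-- With a larger payoff shift β₂ > β₁ and larger likelihood
ratio L₂ > L₁, the density g₁ single-crosses g₂ from below. -/
theorem allocation_single_crossing_in_shift
    (α β₁ β₂ L₁ L₂ lamS : ℝ) (hα : 0 < α) (hβ : β₁ < β₂)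
    (hL1 : 0 < L₁) (hL12 : L₁ < L₂) (hS : 0 < lamS)
    (g₁ g₂ : ℝ → ℝ)
    (hg₁ : ∀ θ, g₁ θ = lamS * (L₁ + 1) / (L₁ + Real.exp (-(α * (θ + β₁)))))
    (hg₂ : ∀ θ, g₂ θ = lamS * (L₂ + 1) / (L₂ + Real.exp (-(α * (θ + β₂))))) :
    ∀ θ' θ'', 0 ≤ θ' → θ' < θ'' → θ'' ≤ 1 →
      g₁ θ' ≥ g₂ θ' → g₁ θ'' > g₂ θ'' := by
  intro θ' θ'' _ hθ _ h
  have key : ∀ θ β : ℝ, Real.exp (-(α * (θ + β))) =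
      Real.exp (-(α * θ)) * Real.exp (-(α * β)) := by
    intro θ β
    rw [← Real.exp_add]
    ring_nf
  rw [hg₁, hg₂] at h ⊢
  simp only [key] at h ⊢
  have hb : Real.exp (-(α * β₂)) < Real.exp (-(α * β₁)) :=
    Real.exp_lt_exp.mpr (by nlinarith)
  have hx : Real.exp (-(α * θ'')) < Real.exp (-(α * θ')) :=
    Real.exp_lt_exp.mpr (by nlinarith)
  have hy0 := Real.exp_pos (-(α * θ''))
  have hx0 := Real.exp_pos (-(α * θ'))
  have hb1 := Real.exp_pos (-(α * β₁))
  have hb2 := Real.exp_pos (-(α * β₂))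
  generalize Real.exp (-(α * β₁)) = b₁ at *
  generalize Real.exp (-(α * β₂)) = b₂ at *
  generalize Real.exp (-(α * θ')) = x at *
  generalize Real.exp (-(α * θ'')) = y at *
  have hL2 : 0 < L₂ := hL1.trans hL12
  have hc : (L₁ + 1) * b₂ - (L₂ + 1) * b₁ < 0 := by nlinarith
  rw [ge_iff_le, div_le_div_iff₀ (by positivity) (by positivity)] at h
  rw [gt_iff_lt, div_lt_div_iff₀ (by positivity) (by positivity)]
  have h1 : 0 ≤ (L₂ - L₁) + x * ((L₁ + 1) * b₂ - (L₂ + 1) * b₁) := by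
    refine le_of_mul_le_mul_left ?_ hS
    linarith
  have h2 : 0 < (L₂ - L₁) + y * ((L₁ + 1) * b₂ - (L₂ + 1) * b₁) := by
    have := mul_lt_mul_of_neg_right hx hc
    linarith
  have h3 := mul_pos hS h2
  linarith
end

section
/- Let z > 0, v ∈ (1/2, 1), and x > 1. Suppose e^{zxv}·(1 − e^{z(1−x)}) = (x−1)·(e^z − 1). Then z·v·e^{zxv}·(1 − e^{z(1−x)}) + z·e^{zxv}·e^{z(1−x)} − (e^z − 1) > 0. (At any zero of h(x;z) := e^{zxv}(1 − e^{z(1−x)}) − (x−1)(e^z − 1), the partial derivative of h with respect to x is strictly positive.) -/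
/-!
Put `s = z (x - 1) > 0`, `w = exp (-s)` and `A = exp (z x v)`. Multiplying the derivative by `x - 1`
and replacing `(x - 1) (exp z - 1)` by `A (1 - w)`, which is the condition `h = 0`, turns it into
`A (s v (1 - w) + s w - (1 - w))`. Since `v > 1/2`, the bracket exceeds
`(s (1 + w) - 2 (1 - w)) / 2`, which is nonnegative because `tanh (s / 2) ≤ s / 2`
(`two_mul_one_sub_exp_neg_le`).
-/

/-- The inequality `tanh (s / 2) ≤ s / 2` with denominators cleared. The difference of the two sides
vanishes at `0` and has derivative `1 - (1 + s) exp (-s) ≥ 0`. -/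
lemma two_mul_one_sub_exp_neg_le {s : ℝ} (hs : 0 ≤ s) :
    2 * (1 - Real.exp (-s)) ≤ s * (1 + Real.exp (-s)) := by
  have hderiv : ∀ t : ℝ, HasDerivAt
      (fun t : ℝ => t * (1 + Real.exp (-t)) - 2 * (1 - Real.exp (-t)))
      (1 - (1 + t) * Real.exp (-t)) t := by
    intro t
    have hexp : HasDerivAt (fun t : ℝ => Real.exp (-t)) (Real.exp (-t) * (-1)) t :=
      (hasDerivAt_neg t).exp
    refine (((hasDerivAt_id' t).mul (hexp.const_add 1)).sub
      ((hexp.const_sub 1).const_mul 2)).congr_deriv ?_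
    ring
  have hmono : Monotone (fun t : ℝ => t * (1 + Real.exp (-t)) - 2 * (1 - Real.exp (-t))) := by
    refine monotone_of_deriv_nonneg (fun t => (hderiv t).differentiableAt) fun t => ?_
    rw [(hderiv t).deriv]
    have hle := mul_le_mul_of_nonneg_right (Real.add_one_le_exp t) (Real.exp_pos (-t)).le
    rw [← Real.exp_add, add_neg_cancel, Real.exp_zero] at hle
    linarith
  have h := hmono hs
  simp only [neg_zero, Real.exp_zero] at h
  linarith

/-- At any zero of h(x;z) := e^{zxv}(1 − e^{z(1−x)}) − (x−1)(e^z − 1)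
with x > 1, z > 0 and v ∈ (1/2, 1), the partial derivative in x is positive:
z·v·e^{zxv}·(1 − e^{z(1−x)}) + z·e^{zxv}·e^{z(1−x)} − (e^z − 1) > 0. -/
theorem dh_dx_positive_at_zero
    (z v x : ℝ) (hz : 0 < z) (hv : v ∈ Set.Ioo (1 / 2 : ℝ) 1) (hx : 1 < x)
    (hzero : Real.exp (z * x * v) * (1 - Real.exp (z * (1 - x))) =
      (x - 1) * (Real.exp z - 1)) :
    z * v * Real.exp (z * x * v) * (1 - Real.exp (z * (1 - x))) +
      z * Real.exp (z * x * v) * Real.exp (z * (1 - x)) -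
      (Real.exp z - 1) > 0 := by
  have ht : 0 < x - 1 := sub_pos.2 hx
  have hs : 0 < z * (x - 1) := mul_pos hz ht
  have hkey := two_mul_one_sub_exp_neg_le hs.le
  rw [show -(z * (x - 1)) = z * (1 - x) by ring] at hkey
  have hw : Real.exp (z * (1 - x)) < 1 :=
    Real.exp_lt_one_iff.2 (mul_neg_of_pos_of_neg hz (by linarith))
  have hA := Real.exp_pos (z * x * v)
  generalize Real.exp (z * (1 - x)) = w at *
  generalize Real.exp (z * x * v) = A at *
  have hv' : 0 < z * (x - 1) * (1 - w) * (v - 1 / 2) :=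
    mul_pos (mul_pos hs (sub_pos.2 hw)) (sub_pos.2 hv.1)
  have hbracket : 0 < z * (x - 1) * v * (1 - w) + z * (x - 1) * w - (1 - w) := by
    linarith
  refine pos_of_mul_pos_right (a := x - 1) ?_ ht.le
  have heq : (x - 1) * (z * v * A * (1 - w) + z * A * w - (Real.exp z - 1)) =
      A * (z * (x - 1) * v * (1 - w) + z * (x - 1) * w - (1 - w)) := by
    linear_combination hzero
  rw [heq]
  exact mul_pos hA hbracket
end

section
/- Let z > 0, v ∈ (1/2, 1), and 1 < x < 2. Suppose e^{zxv}·(1 − e^{z(1−x)}) = (x−1)·(e^z − 1). Then e^{zxv}·x·v·(1 − e^{z(1−x)}) + e^{zxv}·e^{z(1−x)}·(x−1) − (x−1)·e^z < 0. (At any zero of h(x;z) := e^{zxv}(1 − e^{z(1−x)}) − (x−1)(e^z − 1) with x < 2, the partial derivative of h with respect to z is strictly negative.) -/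
/-!
Put `a = x - 1 ∈ (0, 1)`. Solving `h = 0` for `exp (z x v)` and substituting, the claim becomes
`x v + a / (exp (z a) - 1) < 1 + 1 / (exp z - 1)`. Taking logarithms in `h = 0` expresses `z x v`
through `log (exp z - 1)` and `log (exp (z a) - 1)`, and the inequality (times `z`) turns into
`dhAux z < dhAux (z a)` for the function `dhAux` below. As `z a < z`, it suffices that `dhAux` is
strictly decreasing on `(0, ∞)`; the sign of its derivative is that of `t ^ 2 * exp t - (exp t - 1) ^ 2`,
negative because `t / 2 < sinh (t / 2)`.
-/

/-- The function `log ((1 - exp (-t)) / t) - t / (exp t - 1)`, with the logarithm expanded. -/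
noncomputable def dhAux (t : ℝ) : ℝ :=
  Real.log (Real.exp t - 1) - t - Real.log t - t / (Real.exp t - 1)

lemma sq_mul_exp_lt (t : ℝ) (ht : 0 < t) : t ^ 2 * Real.exp t < (Real.exp t - 1) ^ 2 := by
  have h1 : t / 2 < Real.sinh (t / 2) := Real.self_lt_sinh_iff.2 (by positivity)
  rw [Real.sinh_eq] at h1
  have hpos := Real.exp_pos (t / 2)
  have h2 : Real.exp (t / 2) * Real.exp (-(t / 2)) = 1 := by rw [← Real.exp_add]; simp
  have h3 : Real.exp t = Real.exp (t / 2) ^ 2 := by rw [← Real.exp_nat_mul]; congr 1; push_cast; ring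
  have h4 : t * Real.exp (t / 2) < Real.exp t - 1 := by rw [h3]; nlinarith
  calc t ^ 2 * Real.exp t = (t * Real.exp (t / 2)) ^ 2 := by rw [h3]; ring
    _ < _ := by gcongr

lemma dhAux_hasDerivAt (t : ℝ) (ht : 0 < t) :
    HasDerivAt dhAux
      ((t ^ 2 * Real.exp t - (Real.exp t - 1) ^ 2) / (t * (Real.exp t - 1) ^ 2)) t := by
  have hB : Real.exp t - 1 ≠ 0 := (sub_pos.2 (Real.one_lt_exp_iff.2 ht)).ne'
  have he : HasDerivAt (fun s => Real.exp s - 1) (Real.exp t) t :=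
    (Real.hasDerivAt_exp t).sub_const 1
  have h := (((he.log hB).sub (hasDerivAt_id t)).sub (Real.hasDerivAt_log ht.ne')).sub
    ((hasDerivAt_id t).div he hB)
  refine HasDerivAt.congr_deriv h ?_
  simp only [id]
  field_simp
  ring

lemma dhAux_strictAntiOn : StrictAntiOn dhAux (Set.Ioi 0) := by
  refine strictAntiOn_of_deriv_neg (convex_Ioi 0)
    (fun t ht => (dhAux_hasDerivAt t ht).continuousAt.continuousWithinAt) fun t ht => ?_
  rw [interior_Ioi] at ht
  have ht0 : 0 < t := ht
  have hB : 0 < Real.exp t - 1 := sub_pos.2 (Real.one_lt_exp_iff.2 ht0)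
  rw [(dhAux_hasDerivAt t ht0).deriv]
  exact div_neg_of_neg_of_pos (sub_neg.2 (sq_mul_exp_lt t ht0)) (by positivity)

/-- At any zero of h(x;z) := e^{zxv}(1 − e^{z(1−x)}) − (x−1)(e^z − 1)
with 1 < x < 2, z > 0 and v ∈ (1/2, 1), the partial derivative in z is negative:
e^{zxv}·x·v·(1 − e^{z(1−x)}) + e^{zxv}·e^{z(1−x)}·(x−1) − (x−1)·e^z < 0. -/
theorem dh_dz_negative_at_zero
    (z v x : ℝ) (hz : 0 < z) (hv : v ∈ Set.Ioo (1 / 2 : ℝ) 1)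
    (hx1 : 1 < x) (hx2 : x < 2)
    (hzero : Real.exp (z * x * v) * (1 - Real.exp (z * (1 - x))) =
      (x - 1) * (Real.exp z - 1)) :
    Real.exp (z * x * v) * x * v * (1 - Real.exp (z * (1 - x))) +
      Real.exp (z * x * v) * Real.exp (z * (1 - x)) * (x - 1) -
      (x - 1) * Real.exp z < 0 := by
  obtain ⟨a, rfl⟩ : ∃ a, x = a + 1 := ⟨x - 1, by ring⟩
  have ha : 0 < a := by linarith
  have hza : 0 < z * a := by positivity
  have hA : 0 < Real.exp z - 1 := sub_pos.2 (Real.one_lt_exp_iff.2 hz)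
  have hB : 0 < Real.exp (z * a) - 1 := sub_pos.2 (Real.one_lt_exp_iff.2 hza)
  have hmono : dhAux z < dhAux (z * a) :=
    dhAux_strictAntiOn hza hz (by nlinarith)
  have hneg : Real.exp (z * (1 - (a + 1))) = (Real.exp (z * a))⁻¹ := by
    rw [← Real.exp_neg]; congr 1; ring
  have hP := Real.exp_pos (z * (a + 1) * v)
  have hE := Real.exp_pos (z * a)
  rw [hneg] at hzero ⊢
  have hzero' : Real.exp (z * (a + 1) * v) * (Real.exp (z * a) - 1) =
      a * (Real.exp z - 1) * Real.exp (z * a) := by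
    field_simp at hzero
    linarith
  have hlog : z * (a + 1) * v + Real.log (Real.exp (z * a) - 1) =
      Real.log a + Real.log (Real.exp z - 1) + z * a := by
    have := congrArg Real.log hzero'
    rwa [Real.log_mul hP.ne' hB.ne', Real.log_mul (by positivity) hE.ne',
      Real.log_mul ha.ne' hA.ne', Real.log_exp, Real.log_exp] at this
  unfold dhAux at hmono
  rw [Real.log_mul hz.ne' ha.ne'] at hmono
  have key : (a + 1) * v + a / (Real.exp (z * a) - 1) - 1 - 1 / (Real.exp z - 1) < 0 := by
    have : z * ((a + 1) * v + a / (Real.exp (z * a) - 1) - 1 - 1 / (Real.exp z - 1)) < 0 := by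
      have e : z * ((a + 1) * v + a / (Real.exp (z * a) - 1) - 1 - 1 / (Real.exp z - 1)) =
        z * (a + 1) * v + z * a / (Real.exp (z * a) - 1) - z - z / (Real.exp z - 1) := by ring
      rw [e]; linarith
    exact neg_of_mul_neg_right this hz.le
  have hPE : Real.exp (z * (a + 1) * v) * (Real.exp (z * a))⁻¹ =
      a * (Real.exp z - 1) / (Real.exp (z * a) - 1) := by
    field_simp
    linarith
  have hgoal : Real.exp (z * (a + 1) * v) * (a + 1) * v * (1 - (Real.exp (z * a))⁻¹) +
      Real.exp (z * (a + 1) * v) * (Real.exp (z * a))⁻¹ * (a + 1 - 1) -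
      (a + 1 - 1) * Real.exp z = a * (Real.exp z - 1) *
      ((a + 1) * v + a / (Real.exp (z * a) - 1) - 1 - 1 / (Real.exp z - 1)) := by
    have e1 : Real.exp (z * (a + 1) * v) * (a + 1) * v * (1 - (Real.exp (z * a))⁻¹) =
        (a + 1) * v * ((a + 1 - 1) * (Real.exp z - 1)) := by rw [← hzero]; ring
    rw [e1, hPE]
    field_simp
    ring
  rw [hgoal]
  exact mul_neg_of_pos_of_neg (by positivity) key
end

section
/- The function y ↦ ln(y/(e^y − 1)) + y + y/(e^y − 1) is strictly increasing on (0, ∞). -/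
/-!
The derivative simplifies to `1 / y - y * e ^ y / (e ^ y - 1) ^ 2`, whose positivity is equivalent to
`y * e ^ (y / 2) < e ^ y - 1`, that is, to `y / 2 < sinh (y / 2)`.
-/

/-- The inequality `y / 2 < sinh (y / 2)`, multiplied by `2 * e ^ (y / 2)` and squared. -/
lemma sq_mul_exp_lt_sq_exp_sub_one {y : ℝ} (hy : 0 < y) :
    y ^ 2 * Real.exp y < (Real.exp y - 1) ^ 2 := by
  have h : y / 2 < Real.sinh (y / 2) := Real.self_lt_sinh_iff.2 (by positivity)
  rw [Real.sinh_eq, Real.exp_neg] at h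
  have hs : 0 < Real.exp (y / 2) := Real.exp_pos _
  have hE : Real.exp y = Real.exp (y / 2) ^ 2 := by
    rw [← Real.exp_nat_mul]
    congr 1
    push_cast
    ring
  rw [hE]
  generalize Real.exp (y / 2) = s at h hs
  have h1 : y * s < s ^ 2 - 1 := by
    have h2 : y * s < (s - s⁻¹) * s := by
      apply mul_lt_mul_of_pos_right _ hs
      linarith
    have h3 : s⁻¹ * s = 1 := inv_mul_cancel₀ hs.ne'
    nlinarith
  rw [← mul_pow]
  exact pow_lt_pow_left₀ h1 (by positivity) two_ne_zero

lemma hasDerivAt_log_ratio_plus_linear {y : ℝ} (hy : 0 < y) :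
    HasDerivAt (fun y : ℝ => Real.log (y / (Real.exp y - 1)) + y + y / (Real.exp y - 1))
      (1 / y - y * Real.exp y / (Real.exp y - 1) ^ 2) y := by
  have hE : Real.exp y - 1 ≠ 0 := (sub_pos.2 (Real.one_lt_exp_iff.2 hy)).ne'
  have hd : HasDerivAt (fun y : ℝ => y / (Real.exp y - 1)) _ y :=
    (hasDerivAt_id' y).fun_div ((Real.hasDerivAt_exp y).sub_const 1) hE
  have hl := hd.log (div_ne_zero hy.ne' hE)
  refine ((hl.fun_add (hasDerivAt_id' y)).fun_add hd).congr_deriv ?_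
  have hy0 := hy.ne'
  field_simp
  ring

/-- y ↦ ln(y/(e^y − 1)) + y + y/(e^y − 1) is strictly
increasing on (0, ∞). -/
theorem log_ratio_plus_linear_strictMonoOn :
    StrictMonoOn
      (fun y : ℝ => Real.log (y / (Real.exp y - 1)) + y + y / (Real.exp y - 1))
      (Set.Ioi (0 : ℝ)) := by
  refine strictMonoOn_of_deriv_pos (convex_Ioi 0)
    (fun y hy => (hasDerivAt_log_ratio_plus_linear hy).continuousAt.continuousWithinAt) ?_
  intro y hy
  rw [interior_Ioi] at hy
  have hy0 : 0 < y := hy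
  have hE : 0 < Real.exp y - 1 := sub_pos.2 (Real.one_lt_exp_iff.2 hy0)
  rw [(hasDerivAt_log_ratio_plus_linear hy0).deriv, sub_pos, div_lt_div_iff₀ (by positivity) hy0]
  linarith [sq_mul_exp_lt_sq_exp_sub_one hy0]
end

section
/- For every x ∈ (1, 2) and every z > 0, one has (x−1)·(e^z − 1) > e^{xz/2} − e^{z(1−x/2)}. Equivalently, ln((x−1)(e^z − 1)/(1 − e^{z(1−x)})) > zx/2 for all x ∈ (1,2) and z > 0. -/
/-!
Dividing the first inequality by `2 * exp (z / 2)` and writing `t = x - 1`, it becomes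
`sinh (t * (z / 2)) < t * sinh (z / 2)` for `0 < t < 1`, which is strict convexity of `sinh` on
`[0, ∞)` together with `sinh 0 = 0`. The logarithmic form follows because
`exp (z * x / 2) * (1 - exp (z * (1 - x)))` is the right-hand side of the first inequality.
-/

theorem strictConvexOn_sinh_Ici : StrictConvexOn ℝ (Set.Ici (0 : ℝ)) Real.sinh := by
  refine strictConvexOn_of_deriv2_pos (convex_Ici 0) Real.continuous_sinh.continuousOn ?_
  intro y hy
  rw [interior_Ici] at hy
  simpa using hy

theorem sinh_mul_lt {t w : ℝ} (ht0 : 0 < t) (ht1 : t < 1) (hw : 0 < w) :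
    Real.sinh (t * w) < t * Real.sinh w := by
  have h := strictConvexOn_sinh_Ici.2 (Set.mem_Ici.2 hw.le) (Set.mem_Ici.2 le_rfl) hw.ne'
    ht0 (sub_pos.2 ht1) (by ring)
  simpa using h

/-- For every x ∈ (1,2) and z > 0,
(x−1)(e^z − 1) > e^{xz/2} − e^{z(1−x/2)}; equivalently,
ln((x−1)(e^z − 1)/(1 − e^{z(1−x)})) > zx/2. -/
theorem boston_auxiliary_inequality
    (x z : ℝ) (hx1 : 1 < x) (hx2 : x < 2) (hz : 0 < z) :
    (x - 1) * (Real.exp z - 1) >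
      Real.exp (x * z / 2) - Real.exp (z * (1 - x / 2)) ∧
    Real.log ((x - 1) * (Real.exp z - 1) / (1 - Real.exp (z * (1 - x)))) >
      z * x / 2 := by
  have key : (x - 1) * (Real.exp z - 1) >
      Real.exp (x * z / 2) - Real.exp (z * (1 - x / 2)) := by
    have h := sinh_mul_lt (t := x - 1) (w := z / 2) (by linarith) (by linarith) (by linarith)
    have h2 := mul_lt_mul_of_pos_left h (mul_pos two_pos (Real.exp_pos (z / 2)))
    have e1 : Real.exp (x * z / 2) = Real.exp (z / 2) * Real.exp ((x - 1) * (z / 2)) := by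
      rw [← Real.exp_add]; ring_nf
    have e2 : Real.exp (z * (1 - x / 2)) =
        Real.exp (z / 2) * Real.exp (-((x - 1) * (z / 2))) := by
      rw [← Real.exp_add]; ring_nf
    have e3 : Real.exp z = Real.exp (z / 2) * Real.exp (z / 2) := by
      rw [← Real.exp_add]; ring_nf
    have e4 : Real.exp (z / 2) * Real.exp (-(z / 2)) = 1 := by
      rw [← Real.exp_add]; simp
    rw [Real.sinh_eq, Real.sinh_eq] at h2
    rw [e1, e2, e3]
    linear_combination h2 - (x - 1) * e4
  refine ⟨key, ?_⟩
  have hden : 0 < 1 - Real.exp (z * (1 - x)) := by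
    have : Real.exp (z * (1 - x)) < 1 := Real.exp_lt_one_iff.2 (by nlinarith)
    linarith
  have hnum : 0 < (x - 1) * (Real.exp z - 1) :=
    mul_pos (by linarith) (sub_pos.2 (Real.one_lt_exp_iff.2 hz))
  rw [gt_iff_lt, Real.lt_log_iff_exp_lt (div_pos hnum hden), lt_div_iff₀ hden]
  have e : Real.exp (z * x / 2) * Real.exp (z * (1 - x)) = Real.exp (z * (1 - x / 2)) := by
    rw [← Real.exp_add]; ring_nf
  rw [mul_sub, mul_one, e, mul_comm z x]
  exact key
end

section
/- Let z > 0, w > 0, v ∈ (0,1), and r̂ := z/(z+w). Define h_1(r) := 1 + (e^{z/r} − 1)/(((1−r)/r)·e^{w/(1−r)}·e^{−zv/r} + 1) for r ∈ (0,1). Then h_1 single-crosses the constant e^z from above to below as r increases on [r̂, 1): for all r̂ ≤ r' < r'' < 1, if e^z ≥ h_1(r') then e^z > h_1(r''). -/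
/-!
Write `t = (1 - r) / r` and `A(r) = e^{w/(1-r)} e^{-zv/r}`. Clearing the positive denominator,
`h₁ r ≤ e^z` says `e^{z/r} - e^z ≤ (e^z - 1) t A(r)`. Since `z/r - z = z t`, dividing by `t` turns
this into `z S(r) ≤ (e^z - 1) A(r)`, where `S(r)` is the slope of the secant of `exp` between `z`
and `z/r`. By strict convexity of `exp` the left side strictly decreases in `r`, and the right side
increases in `r`, so the inequality is inherited, strictly, by larger `r`. The argument works on
all of `(0, 1)`; the bound `rhat ≤ r'` only serves to make `r'` positive.
-/

/-- The secant slope of `exp` between `z` and `z / r`. -/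
noncomputable def expSecant (z r : ℝ) : ℝ :=
  (Real.exp (z / r) - Real.exp z) / (z / r - z)

/-- The gap `e^z - h₁(r)`, up to a positive denominator, is `t = (1 - r) / r` times the difference
of the two sides of the divided inequality. -/
lemma exp_sub_branch_eq (z r A : ℝ) (hz : 0 < z) (hr : 0 < r) (hr1 : r < 1) (hA : 0 < A) :
    Real.exp z - (1 + (Real.exp (z / r) - 1) / ((1 - r) / r * A + 1)) =
      ((1 - r) / r) / ((1 - r) / r * A + 1) *
        ((Real.exp z - 1) * A - z * expSecant z r) := by
  have ht : 0 < (1 - r) / r := div_pos (by linarith) hr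
  have hgap : z / r - z = z * ((1 - r) / r) := by field_simp
  have hS : Real.exp (z / r) - Real.exp z = (1 - r) / r * (z * expSecant z r) := by
    rw [expSecant, hgap]
    field_simp [show (1 - r) ≠ 0 by linarith]
  have hD : (1 - r) / r * A + 1 ≠ 0 := by positivity
  generalize (1 - r) / r = t at *
  field_simp
  linear_combination -hS

lemma expSecant_strictAnti (z r' r'' : ℝ) (hz : 0 < z) (hr : 0 < r') (hlt : r' < r'')
    (hr1 : r'' < 1) : expSecant z r'' < expSecant z r' := by
  have h2 : z < z / r'' := by
    rw [lt_div_iff₀ (hr.trans hlt)]; nlinarith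
  have h3 : z / r'' < z / r' := div_lt_div_of_pos_left hz hr hlt
  exact strictConvexOn_exp.secant_strict_mono (Set.mem_univ z) (Set.mem_univ _) (Set.mem_univ _)
    h2.ne' (h2.trans h3).ne' h3

/-- The branch h₁ of the Boston equilibrium condition
single-crosses the constant e^z from above to below on [r̂, 1). -/
theorem boston_branch_one_single_crossing
    (z w v : ℝ) (hz : 0 < z) (hw : 0 < w) (hv : v ∈ Set.Ioo (0 : ℝ) 1)
    (rhat : ℝ) (hrhat : rhat = z / (z + w))
    (h₁ : ℝ → ℝ)
    (hh₁ : ∀ r, h₁ r = 1 + (Real.exp (z / r) - 1) /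
      (((1 - r) / r) * Real.exp (w / (1 - r)) * Real.exp (-(z * v) / r) + 1)) :
    ∀ r' r'', rhat ≤ r' → r' < r'' → r'' < 1 →
      Real.exp z ≥ h₁ r' → Real.exp z > h₁ r'' := by
  intro r' r'' hle hlt hr1 hcross
  have hr : 0 < r' := lt_of_lt_of_le (by rw [hrhat]; positivity) hle
  have hzv : 0 < z * v := mul_pos hz hv.1
  have hsec := expSecant_strictAnti z r' r'' hz hr hlt hr1
  have hA : Real.exp (w / (1 - r')) * Real.exp (-(z * v) / r') ≤
      Real.exp (w / (1 - r'')) * Real.exp (-(z * v) / r'') := by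
    have e1 : w / (1 - r') ≤ w / (1 - r'') :=
      div_le_div_of_nonneg_left hw.le (by linarith) (by linarith)
    have e2 : -(z * v) / r' ≤ -(z * v) / r'' := by
      rw [neg_div, neg_div]
      exact neg_le_neg (div_le_div_of_nonneg_left hzv.le hr hlt.le)
    gcongr
  have hpos (r : ℝ) : 0 < Real.exp (w / (1 - r)) * Real.exp (-(z * v) / r) := by positivity
  have heq' := exp_sub_branch_eq z r' _ hz hr (hlt.trans hr1) (hpos r')
  have heq'' := exp_sub_branch_eq z r'' _ hz (hr.trans hlt) hr1 (hpos r'')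
  rw [← mul_assoc, ← hh₁] at heq' heq''
  have hfac (r : ℝ) (h0 : 0 < r) (h1 : r < 1) : 0 < ((1 - r) / r) /
      ((1 - r) / r * Real.exp (w / (1 - r)) * Real.exp (-(z * v) / r) + 1) := by
    have : 0 < (1 - r) / r := div_pos (by linarith) h0
    positivity
  have hbase := nonneg_of_mul_nonneg_right (heq' ▸ sub_nonneg.2 hcross)
    (hfac r' hr (hlt.trans hr1))
  have hez : 0 < Real.exp z - 1 := sub_pos.2 (Real.one_lt_exp_iff.2 hz)
  have h1 := mul_le_mul_of_nonneg_left hA hez.le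
  have h2 := mul_lt_mul_of_pos_left hsec hz
  refine sub_pos.1 (heq'' ▸ mul_pos (hfac r'' (hr.trans hlt) hr1) ?_)
  linarith
end
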